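/- arXiv:2312.05659 — 2 statements merged into one kernel-verified Lean document; each statement's English description precedes it below -/
import Mathlib

section
/- Let ε > 0, let Y ⊆ ℝ be a finite set of input labels with |Y| ≥ 2, let g : ℝ × ℝ → ℝ be a loss such that g(·, y) is convex for every y ∈ Y, and let P be a prior on Y. Then for every ε-DP unbiased label randomizer M⁰ on Y with finitely many output labels, there exists an ε-DP unbiased label randomizer M on Y with output labels ŷ_1 ≤ ... ≤ ŷ_m such that: (1) G(M;P) ≤ G(M⁰;P); (2) every column of M is nonzero and, writing q_i = min_{y∈Y} M_{y→i}, every entry satisfies M_{y→i} ∈ {q_i, e^ε·q_i}, with both values attained by some input label (so each column consists only of 'U' entries equal to e^ε·q_i and 'L' entries equal to q_i, with at least one of each); (3) for every i, the set T(i) := {y ∈ Y : M_{y→i} = e^ε·q_i} is a contiguous interval of Y with respect to the ordering of Y as real numbers (each column matches the pattern L*U+L*); (4) writing Φ₁(i) = min T(i) and Φ₂(i) = max T(i), for all i < i' one has Φ₁(i) ≤ Φ₁(i') and Φ₂(i) ≤ Φ₂(i'), with at least one of the two inequalities strict. -/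
/-!
Only the sets of `U` entries matter: a nonnegative column whose entries differ by a factor of at
most `E = e^ε` is a mixture of columns with entries in `{q, E q}`, and columns with the same pattern
can be merged at their barycentre, which lowers every convex loss. Improvements of `M₀` in the
convex order with one column per pattern form a compact set; pick one minimizing the second moment
on some input. Strict convexity of the square forbids a constant column, since it could be split
into two complementary patterns and each part merged at a different label.

Lay the columns end to end on a line in increasing order of label, so that input `y` gives `E` times
the density to a set of positions `C y`. Unbiasedness makes the length of `C y` independent of `y`
and its barycentre strictly increasing in `y`. Replacing `C y` by a window of the same length and
barycentre lowers every convex loss again, and the starting points of the windows increase with `y`.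
A position lies in the windows of an interval of inputs, and these intervals move up along the line.
-/

open Set MeasureTheory

section Convex

variable {φ : ℝ → ℝ} {α β : ℝ}

lemma exists_subgradient (hφ : ConvexOn ℝ univ φ) (α : ℝ) :
    ∃ σ, ∀ s, φ α + σ * (s - α) ≤ φ s := by
  refine ⟨derivWithin φ (Ioi α) α, fun s => ?_⟩
  rcases lt_trichotomy s α with h | rfl | h
  · have hslope := (hφ.slope_le_leftDeriv_of_mem_interior (by simp) (by simp) h).trans
      (hφ.leftDeriv_le_rightDeriv_of_mem_interior (by simp))
    rw [slope_def_field, div_le_iff₀ (by linarith)] at hslope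
    linarith
  · simp
  · have hslope := hφ.rightDeriv_le_slope_of_mem_interior (by simp) (mem_univ s) h
    rw [slope_def_field, le_div_iff₀ (by linarith)] at hslope
    linarith

lemma secant_inequality (hφ : ConvexOn ℝ univ φ) {x y z : ℝ} (hxy : x ≤ y) (hyz : y ≤ z) :
    (z - x) * φ y ≤ (z - y) * φ x + (y - x) * φ z := by
  rcases hxy.eq_or_lt with rfl | hxy
  · simp
  rcases hyz.eq_or_lt with rfl | hyz
  · simp
  exact hφ.secant_mono_aux1 (mem_univ x) (mem_univ z) hxy hyz

lemma exists_affine_crossing (hφ : ConvexOn ℝ univ φ) (hαβ : α ≤ β) :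
    ∃ a σ : ℝ, (∀ s ∈ Icc α β, φ s ≤ a + σ * s) ∧ ∀ s ∉ Ioo α β, a + σ * s ≤ φ s := by
  rcases hαβ.eq_or_lt with rfl | hlt
  · obtain ⟨σ, hσ⟩ := exists_subgradient hφ α
    refine ⟨φ α - σ * α, σ, fun s hs => ?_, fun s _ => by linarith [hσ s]⟩
    rw [show s = α by simpa using hs]
    linarith
  · have hpos : 0 < β - α := sub_pos.2 hlt
    have hchord (s : ℝ) : (β - α) * (φ α + (φ β - φ α) / (β - α) * (s - α)) =
        (β - s) * φ α + (s - α) * φ β := by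
      field_simp
      ring
    refine ⟨φ α - (φ β - φ α) / (β - α) * α, (φ β - φ α) / (β - α), fun s hs => ?_,
      fun s hs => ?_⟩ <;> refine le_of_mul_le_mul_left ?_ hpos
    · linarith [hchord s, secant_inequality hφ hs.1 hs.2]
    · rcases not_and_or.1 hs with h | h
      · linarith [hchord s, secant_inequality hφ (not_lt.1 h) hαβ]
      · linarith [hchord s, secant_inequality hφ hαβ (not_lt.1 h)]

end Convex

lemma setIntegral_mono_of_sign {X : Type*} [MeasurableSpace X] {μ : Measure X} {f : X → ℝ}
    {s t : Set X} (hs : MeasurableSet s) (ht : MeasurableSet t)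
    (hfs : IntegrableOn f s μ) (hft : IntegrableOn f t μ)
    (hneg : ∀ u ∈ s \ t, f u ≤ 0) (hpos : ∀ u ∈ t \ s, 0 ≤ f u) :
    ∫ u in s, f u ∂μ ≤ ∫ u in t, f u ∂μ := by
  rw [← integral_indicator hs, ← integral_indicator ht]
  refine integral_mono (hfs.integrable_indicator hs) (hft.integrable_indicator ht) fun u => ?_
  by_cases hus : u ∈ s <;> by_cases hut : u ∈ t <;>
    simp only [indicator, hus, hut, if_true, if_false]
  exacts [le_rfl, hneg u ⟨hus, hut⟩, hpos u ⟨hut, hus⟩, le_rfl]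

lemma setIntegral_affine {X : Type*} [MeasurableSpace X] {μ : Measure X} {f : X → ℝ} {s : Set X}
    (hf : IntegrableOn f s μ) (hs : μ s ≠ ⊤) (a σ : ℝ) :
    ∫ u in s, (a + σ * f u) ∂μ = μ.real s * a + σ * ∫ u in s, f u ∂μ := by
  have hconst : IntegrableOn (fun _ => a) s μ := integrableOn_const hs
  rw [integral_add hconst (hf.const_mul σ), integral_const_mul,
    setIntegral_const, smul_eq_mul]

section Window

variable {ξ φ : ℝ → ℝ}

lemma volume_real_window (t : ℝ) {A : ℝ} (hA : 0 ≤ A) : volume.real (Ioc t (t + A)) = A := by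
  rw [Real.volume_real_Ioc_of_le (by linarith), add_sub_cancel_left]

lemma integrableOn_comp_monotone (hξ : Monotone ξ) (hφ : Continuous φ) {s : Set ℝ}
    (hs : Bornology.IsBounded s) : IntegrableOn (fun u => φ (ξ u)) s := by
  obtain ⟨r, hr⟩ := hs.subset_closedBall 0
  rw [Real.closedBall_eq_Icc, zero_sub, zero_add] at hr
  obtain ⟨C, hC⟩ := (isCompact_Icc (a := ξ (-r)) (b := ξ r)).exists_bound_of_continuousOn
    hφ.continuousOn
  refine (Measure.integrableOn_of_bounded (M := C) measure_Icc_lt_top.ne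
    (hφ.measurable.comp hξ.measurable).aestronglyMeasurable ?_).mono_set hr
  exact ae_restrict_of_forall_mem measurableSet_Icc fun u hu => hC _ ⟨hξ hu.1, hξ hu.2⟩

lemma intervalIntegrable_monotone (hξ : Monotone ξ) (a b : ℝ) :
    IntervalIntegrable ξ volume a b :=
  (hξ.monotoneOn _).intervalIntegrable

lemma monotone_setIntegral_window (hξ : Monotone ξ) {A : ℝ} (hA : 0 ≤ A) :
    Monotone fun t => ∫ u in Ioc t (t + A), ξ u := by
  have hshift (t : ℝ) : ∫ u in Ioc t (t + A), ξ u = ∫ u in (0 : ℝ)..A, ξ (u + t) := by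
    rw [intervalIntegral.integral_comp_add_right, zero_add, add_comm A,
      intervalIntegral.integral_of_le (by linarith)]
  intro t t' htt'
  simp only [hshift]
  exact intervalIntegral.integral_mono hA
    (intervalIntegrable_monotone (fun _ _ h => hξ (by linarith)) _ _)
    (intervalIntegrable_monotone (fun _ _ h => hξ (by linarith)) _ _)
    fun u => hξ (by linarith)

lemma continuous_setIntegral_window (hξ : Monotone ξ) {A : ℝ} (hA : 0 ≤ A) :
    Continuous fun t => ∫ u in Ioc t (t + A), ξ u := by
  have hint := intervalIntegrable_monotone hξ
  have hprim : Continuous fun t => ∫ u in (0 : ℝ)..t, ξ u :=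
    intervalIntegral.continuous_primitive hint 0
  have hdiff (t : ℝ) : ∫ u in Ioc t (t + A), ξ u =
      (∫ u in (0 : ℝ)..(t + A), ξ u) - ∫ u in (0 : ℝ)..t, ξ u := by
    rw [← intervalIntegral.integral_of_le (by linarith),
      intervalIntegral.integral_interval_sub_left (hint _ _) (hint _ _)]
  simp only [hdiff]
  exact (hprim.comp (continuous_id.add_const A)).sub hprim

/- Equal masses and barycentres make every affine function integrate equally over the window and
`B`, and `φ ∘ ξ` minus its crossing line is nonpositive on the window and nonnegative off it. -/
lemma setIntegral_window_le_of_barycentre_eq (hξ : Monotone ξ) {B : Set ℝ} {t : ℝ}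
    (hB : MeasurableSet B) (hBb : Bornology.IsBounded B)
    (heq : ∫ u in Ioc t (t + volume.real B), ξ u = ∫ u in B, ξ u) (hφ : ConvexOn ℝ univ φ) :
    ∫ u in Ioc t (t + volume.real B), φ (ξ u) ≤ ∫ u in B, φ (ξ u) := by
  set w := Ioc t (t + volume.real B)
  have hwB : volume.real w = volume.real B := volume_real_window t measureReal_nonneg
  have hφc : Continuous φ := continuousOn_univ.1 (hφ.continuousOn isOpen_univ)
  obtain ⟨a, σ, hle, hge⟩ := exists_affine_crossing hφ
    (hξ (show t ≤ t + volume.real B by linarith [measureReal_nonneg (μ := volume) (s := B)]))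
  have hint {ψ : ℝ → ℝ} (hψ : Continuous ψ) {s : Set ℝ} (hs : Bornology.IsBounded s) :
      IntegrableOn (fun u => ψ (ξ u)) s := integrableOn_comp_monotone hξ hψ hs
  have hline : Continuous fun s : ℝ => a + σ * s := by fun_prop
  have hlineInt {s : Set ℝ} (hs : Bornology.IsBounded s) :=
    setIntegral_affine (f := ξ) (hint continuous_id hs) hs.measure_lt_top.ne a σ
  have hsign := setIntegral_mono_of_sign (f := fun u => φ (ξ u) - (a + σ * ξ u))
    measurableSet_Ioc hB (hint (hφc.sub hline) (Metric.isBounded_Ioc t (t + volume.real B)))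
    (hint (hφc.sub hline) hBb)
    (fun u hu => sub_nonpos.2 (hle _ ⟨hξ hu.1.1.le, hξ hu.1.2⟩))
    (fun u hu => sub_nonneg.2 (hge _ fun hmem =>
      hu.2 ⟨hξ.reflect_lt hmem.1, (hξ.reflect_lt hmem.2).le⟩))
  have hwb : Bornology.IsBounded w := Metric.isBounded_Ioc _ _
  rw [integral_sub (hint hφc hwb) (hint hline hwb), integral_sub (hint hφc hBb) (hint hline hBb),
    hlineInt hwb, hlineInt hBb, hwB, heq] at hsign
  linarith

lemma setIntegral_le_of_threshold (hξ : Monotone ξ) {s t : Set ℝ} (hs : MeasurableSet s)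
    (ht : MeasurableSet t) (hsb : Bornology.IsBounded s) (htb : Bornology.IsBounded t)
    (hst : volume.real s = volume.real t) {c : ℝ} (hle : ∀ u ∈ s \ t, u ≤ c)
    (hge : ∀ u ∈ t \ s, c ≤ u) : ∫ u in s, ξ u ≤ ∫ u in t, ξ u := by
  have hint {s : Set ℝ} (hs : Bornology.IsBounded s) : IntegrableOn ξ s :=
    integrableOn_comp_monotone hξ continuous_id hs
  have hconst {s : Set ℝ} (hs : Bornology.IsBounded s) : IntegrableOn (fun _ => ξ c) s :=
    integrableOn_const hs.measure_lt_top.ne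
  have hsign := setIntegral_mono_of_sign hs ht ((hint hsb).sub (hconst hsb))
    ((hint htb).sub (hconst htb)) (fun u hu => sub_nonpos.2 (hξ (hle u hu)))
    (fun u hu => sub_nonneg.2 (hξ (hge u hu)))
  simp only [Pi.sub_apply] at hsign
  rw [integral_sub (hint hsb) (hconst hsb), integral_sub (hint htb) (hconst htb),
    setIntegral_const, setIntegral_const, hst] at hsign
  linarith

lemma exists_window_barycentre_eq (hξ : Monotone ξ) {B : Set ℝ} {a b : ℝ} (hB : MeasurableSet B)
    (hBab : B ⊆ Ioc a b) (hab : a ≤ b) : ∃ t ∈ Icc a (b - volume.real B),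
      ∫ u in Ioc t (t + volume.real B), ξ u = ∫ u in B, ξ u := by
  have hA : 0 ≤ volume.real B := measureReal_nonneg
  have hBb : Bornology.IsBounded B := (Metric.isBounded_Ioc a b).subset hBab
  have hAab : volume.real B ≤ b - a := by
    simpa [Real.volume_real_Ioc_of_le hab] using
      measureReal_mono hBab (measure_Ioc_lt_top (μ := volume)).ne
  have hleft : ∫ u in Ioc a (a + volume.real B), ξ u ≤ ∫ u in B, ξ u :=
    setIntegral_le_of_threshold hξ measurableSet_Ioc hB (Metric.isBounded_Ioc _ _) hBb
      (volume_real_window a hA) (fun u hu => hu.1.2)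
      (fun u hu => le_of_not_ge fun h => hu.2 ⟨(hBab hu.1).1, h⟩)
  have hright : ∫ u in B, ξ u ≤
      ∫ u in Ioc (b - volume.real B) (b - volume.real B + volume.real B), ξ u :=
    setIntegral_le_of_threshold hξ hB measurableSet_Ioc hBb (Metric.isBounded_Ioc _ _)
      (volume_real_window _ hA).symm
      (fun u hu => le_of_not_gt fun h => hu.2 ⟨h, by linarith [(hBab hu.1).2]⟩)
      (fun u hu => hu.1.1.le)
  exact intermediate_value_Icc (by linarith) (continuous_setIntegral_window hξ hA).continuousOn
    ⟨hleft, hright⟩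

end Window

section Layout

variable {J : Type*}

lemma Ioc_inter_preimage_append_self {idx : ℝ → J} {a : J} {W k : ℝ} (hW : 0 ≤ W)
    (ha : ∀ u, idx u ≠ a) :
    Ioc 0 (k + W) ∩ (fun u => if u ≤ W then idx u else a) ⁻¹' {a} = Ioc W (W + k) := by
  ext u
  by_cases hu : u ≤ W
  · simp [hu, ha u]
  · simp [hu, add_comm, hW.trans_lt (not_le.1 hu), not_le.1 hu]

lemma Ioc_inter_preimage_append_of_ne {idx : ℝ → J} {a j : J} {W k : ℝ} (hk : 0 ≤ k) (hj : a ≠ j) :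
    Ioc 0 (k + W) ∩ (fun u => if u ≤ W then idx u else a) ⁻¹' {j} = Ioc 0 W ∩ idx ⁻¹' {j} := by
  ext u
  by_cases hu : u ≤ W
  · simp [hu, hu.trans (le_add_of_nonneg_left hk)]
  · simp [hu, hj]

private lemma exists_layout_of_finset (x : J → ℝ) {k : J → ℝ} (hk : ∀ j, 0 ≤ k j)
    (s : Finset J) (hs : s.Nonempty) : ∃ idx : ℝ → J,
      (∀ u, idx u ∈ s) ∧ Monotone (x ∘ idx) ∧ (∀ j, MeasurableSet (idx ⁻¹' {j})) ∧
      ∀ j ∈ s, volume.real (Ioc 0 (∑ i ∈ s, k i) ∩ idx ⁻¹' {j}) = k j := by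
  classical
  induction s using Finset.induction_on_max_value x with
  | empty => exact absurd hs Finset.not_nonempty_empty
  | insert a s ha hmax ih =>
    rcases s.eq_empty_or_nonempty with rfl | hs
    · refine ⟨fun _ => a, by simp, fun _ _ _ => le_rfl, fun j => ?_, fun j hj => ?_⟩
      · exact .const (a = j)
      · obtain rfl : j = a := by simpa using hj
        simp [hk j]
    obtain ⟨idx, hmem, hmono, hmeas, hvol⟩ := ih hs
    set W := ∑ i ∈ s, k i with hW
    have hW0 : 0 ≤ W := Finset.sum_nonneg fun i _ => hk i
    refine ⟨fun u => if u ≤ W then idx u else a, fun u => ?_, fun u u' huu' => ?_, fun j => ?_,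
      fun j hj => ?_⟩
    · by_cases hu : u ≤ W <;> simp [hu, hmem u]
    · by_cases hu' : u' ≤ W
      · simpa [hu', huu'.trans hu'] using hmono huu'
      · by_cases hu : u ≤ W <;> simp [hu, hu', hmax _ (hmem u)]
    · change MeasurableSet ((Iic W).piecewise idx (fun _ => a) ⁻¹' {j})
      rw [piecewise_preimage]
      exact measurableSet_Iic.ite (hmeas j) (.const (a = j))
    · rw [Finset.sum_insert ha, ← hW]
      rcases Finset.mem_insert.1 hj with rfl | hjs
      · rw [Ioc_inter_preimage_append_self hW0 fun u => ne_of_mem_of_not_mem (hmem u) ha,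
          volume_real_window W (hk j)]
      · rw [Ioc_inter_preimage_append_of_ne (hk a) (ne_of_mem_of_not_mem hjs ha).symm,
          hvol j hjs]

/- Stack intervals of lengths `k j` on the line in increasing order of `x j`. -/
lemma exists_layout [Fintype J] [Nonempty J] (x : J → ℝ) {k : J → ℝ} (hk : ∀ j, 0 ≤ k j) :
    ∃ idx : ℝ → J, Monotone (x ∘ idx) ∧ (∀ j, MeasurableSet (idx ⁻¹' {j})) ∧
      ∀ j, volume.real (Ioc 0 (∑ i, k i) ∩ idx ⁻¹' {j}) = k j := by
  classical
  obtain ⟨idx, -, hmono, hmeas, hvol⟩ :=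
    exists_layout_of_finset x hk Finset.univ Finset.univ_nonempty
  exact ⟨idx, hmono, hmeas, fun j => hvol j (Finset.mem_univ j)⟩

lemma setIntegral_comp_eq_sum {X : Type*} [MeasurableSpace X] {μ : Measure X} [Fintype J]
    {p : X → J} (hp : ∀ j, MeasurableSet (p ⁻¹' {j})) {s : Set X} (hs : μ s ≠ ⊤) (F : J → ℝ) :
    ∫ u in s, F (p u) ∂μ = ∑ j, μ.real (s ∩ p ⁻¹' {j}) * F j := by
  let : MeasurableSpace J := ⊤
  have : Fact (μ s < ⊤) := ⟨hs.lt_top⟩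
  have hpm : Measurable p := measurable_to_countable' hp
  rw [← integral_map (φ := p) hpm.aemeasurable (measurable_of_finite F).aestronglyMeasurable,
    integral_fintype .of_finite]
  refine Finset.sum_congr rfl fun j _ => ?_
  rw [map_measureReal_apply hpm (measurableSet_singleton j), measureReal_restrict_apply (hp j),
    inter_comm, smul_eq_mul]

end Layout

section Level

variable {ι : Type*} [DecidableEq ι] {E k : ℝ} {S : Finset ι} {y : ι}

/-- The entry, in units of the column minimum, of label `y` in a column with `U`-set `T`. -/
def level (E : ℝ) (T : Finset ι) (y : ι) : ℝ := if y ∈ T then E else 1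

lemma level_pos (hE : 0 < E) (T : Finset ι) (y : ι) : 0 < level E T y := by
  unfold level
  split_ifs <;> positivity

lemma one_le_level (hE : 1 ≤ E) (T : Finset ι) (y : ι) : 1 ≤ level E T y := by
  unfold level
  split_ifs <;> linarith

lemma mul_level_of_mem (hy : y ∈ S) : k * level E S y = E * k := by
  rw [level, if_pos hy, mul_comm]

lemma mul_level_of_notMem (hy : y ∉ S) : k * level E S y = k := by
  rw [level, if_neg hy, mul_one]

lemma mul_level_eq_iff_mem (hE : 1 < E) (hk : 0 < k) : k * level E S y = E * k ↔ y ∈ S := by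
  refine ⟨fun h => ?_, mul_level_of_mem⟩
  by_contra hy
  rw [mul_level_of_notMem hy] at h
  exact (lt_mul_of_one_lt_left hk hE).ne h

lemma le_mul_level (hE : 1 ≤ E) (hk : 0 ≤ k) : k ≤ k * level E S y :=
  le_mul_of_one_le_right hk (one_le_level hE S y)

lemma mul_level_le (hE : 1 ≤ E) (hk : 0 ≤ k) : k * level E S y ≤ E * k := by
  by_cases hy : y ∈ S
  · exact (mul_level_of_mem hy).le
  · exact (mul_level_of_notMem hy).trans_le (le_mul_of_one_le_left hk hE)

lemma setIntegral_level_mul {X : Type*} [MeasurableSpace X] {μ : Measure X}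
    (E : ℝ) {T : X → Finset ι} (hT : MeasurableSet {u | y ∈ T u}) {h : X → ℝ} {s : Set X}
    (hh : IntegrableOn h s μ) :
    ∫ u in s, level E (T u) y * h u ∂μ =
      ∫ u in s, h u ∂μ + (E - 1) * ∫ u in s ∩ {u | y ∈ T u}, h u ∂μ := by
  have hsplit (u : X) : level E (T u) y * h u = h u + (E - 1) * {u | y ∈ T u}.indicator h u := by
    by_cases hu : y ∈ T u <;> simp [level, hu]
    ring
  simp only [hsplit]
  rw [integral_add hh ((hh.indicator hT).const_mul _), integral_const_mul, setIntegral_indicator hT]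

end Level

section CenterMass

variable {J : Type*} {s : Finset J} {w x : J → ℝ}

lemma sum_mul_centerMass (hw : ∀ j ∈ s, 0 ≤ w j) :
    (∑ j ∈ s, w j) * s.centerMass w x = ∑ j ∈ s, w j * x j := by
  rcases (Finset.sum_nonneg hw).eq_or_lt with h0 | hpos
  · have hzero := (Finset.sum_eq_zero_iff_of_nonneg hw).1 h0.symm
    rw [← h0, zero_mul, Finset.sum_eq_zero fun j hj => by rw [hzero j hj, zero_mul]]
  · simp only [Finset.centerMass, smul_eq_mul]
    rw [mul_inv_cancel_left₀ hpos.ne']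

lemma sum_mul_map_centerMass_le (hw : ∀ j ∈ s, 0 ≤ w j) {φ : ℝ → ℝ} (hφ : ConvexOn ℝ univ φ) :
    (∑ j ∈ s, w j) * φ (s.centerMass w x) ≤ ∑ j ∈ s, w j * φ (x j) := by
  rcases (Finset.sum_nonneg hw).eq_or_lt with h0 | hpos
  · have hzero := (Finset.sum_eq_zero_iff_of_nonneg hw).1 h0.symm
    rw [← h0, zero_mul, Finset.sum_eq_zero fun j hj => by rw [hzero j hj, zero_mul]]
  · rw [← sum_mul_centerMass hw]
    exact mul_le_mul_of_nonneg_left (hφ.map_centerMass_le hw hpos fun _ _ => mem_univ _) hpos.le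

lemma sum_mul_sq_eq_add_variance (hw : ∀ j ∈ s, 0 ≤ w j) :
    ∑ j ∈ s, w j * x j ^ 2 = (∑ j ∈ s, w j) * s.centerMass w x ^ 2 +
      ∑ j ∈ s, w j * (x j - s.centerMass w x) ^ 2 := by
  set c := s.centerMass w x
  have hexpand : ∑ j ∈ s, w j * (x j - c) ^ 2 =
      ∑ j ∈ s, w j * x j ^ 2 - 2 * c * ∑ j ∈ s, w j * x j + (∑ j ∈ s, w j) * c ^ 2 := by
    simp only [Finset.mul_sum, Finset.sum_mul, ← Finset.sum_sub_distrib, ← Finset.sum_add_distrib]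
    exact Finset.sum_congr rfl fun j _ => by ring
  linear_combination (-1 : ℝ) * hexpand - 2 * c * sum_mul_centerMass (x := x) hw

lemma abs_centerMass_le (hw : ∀ j ∈ s, 0 ≤ w j) {B : ℝ} (hB : ∀ j, |x j| ≤ B) (hB0 : 0 ≤ B) :
    |s.centerMass w x| ≤ B := by
  rcases (Finset.sum_nonneg hw).eq_or_lt with h0 | hpos
  · simp [Finset.centerMass, ← h0, hB0]
  · exact abs_le.2 ((convex_Icc (-B) B).centerMass_mem hw hpos fun j _ => abs_le.1 (hB j))

lemma exists_pos_le_centerMass (hw : ∀ j ∈ s, 0 ≤ w j) (hpos : 0 < ∑ j ∈ s, w j) :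
    ∃ j ∈ s, 0 < w j ∧ x j ≤ s.centerMass w x := by
  obtain ⟨i, hi, hwi⟩ : ∃ i ∈ s, 0 < w i := by
    by_contra! hle
    exact hpos.not_ge (Finset.sum_nonpos hle)
  by_contra! hlt
  refine (sum_mul_centerMass (x := x) hw).not_lt ?_
  rw [Finset.sum_mul]
  refine Finset.sum_lt_sum (fun j hj => ?_) ⟨i, hi, mul_lt_mul_of_pos_left (hlt i hi hwi) hwi⟩
  rcases (hw j hj).eq_or_lt with h0 | hwj
  · simp [← h0]
  · exact mul_le_mul_of_nonneg_left (hlt j hj hwj).le hwj.le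

lemma exists_pos_centerMass_le (hw : ∀ j ∈ s, 0 ≤ w j) (hpos : 0 < ∑ j ∈ s, w j) :
    ∃ j ∈ s, 0 < w j ∧ s.centerMass w x ≤ x j := by
  obtain ⟨j, hj, hwj, hle⟩ := exists_pos_le_centerMass (x := -x) hw hpos
  have hneg : s.centerMass w (-x) = -s.centerMass w x := by simp [Finset.centerMass]
  exact ⟨j, hj, hwj, neg_le_neg_iff.1 (hneg ▸ hle)⟩

end CenterMass

/-- A randomizer sending an input `y : ι` to the output number `label j` with probability
`prob y j`. Nothing is required of `prob`; see `IsDP` and `IsUnbiased`. -/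
structure LabelRandomizer (ι J : Type*) where
  prob : ι → J → ℝ
  label : J → ℝ

namespace LabelRandomizer

section Basic

variable {ι J J' : Type*} [Fintype J] [Fintype J']

/-- The expectation of `φ` of the output label on the input `y`. -/
def expect (R : LabelRandomizer ι J) (y : ι) (φ : ℝ → ℝ) : ℝ := ∑ j, R.prob y j * φ (R.label j)

/-- `e^ε`-differential privacy, with `E` standing for `e^ε`. -/
structure IsDP (R : LabelRandomizer ι J) (E : ℝ) : Prop where
  prob_nonneg : ∀ y j, 0 ≤ R.prob y j
  prob_le : ∀ j y y', R.prob y' j ≤ E * R.prob y j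

/-- The rows of `R` have total mass one and the mean output on `y` is `v y`. -/
structure IsUnbiased (R : LabelRandomizer ι J) (v : ι → ℝ) : Prop where
  expect_one : ∀ y, R.expect y (fun _ => 1) = 1
  expect_id : ∀ y, R.expect y id = v y

/-- The convex order: on every input the output of `R` is a less risky lottery than that of `S`.
It makes the loss of `R` at most that of `S` for every convex loss and every prior at once. -/
def ConvexLE (R : LabelRandomizer ι J) (S : LabelRandomizer ι J') : Prop :=
  ∀ y φ, ConvexOn ℝ univ φ → R.expect y φ ≤ S.expect y φ

lemma ConvexLE.trans {J'' : Type*} [Fintype J''] {R : LabelRandomizer ι J}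
    {S : LabelRandomizer ι J'} {T : LabelRandomizer ι J''} (hRS : R.ConvexLE S)
    (hST : S.ConvexLE T) : R.ConvexLE T :=
  fun y φ hφ => (hRS y φ hφ).trans (hST y φ hφ)

lemma expect_neg (R : LabelRandomizer ι J) (y : ι) (φ : ℝ → ℝ) :
    R.expect y (-φ) = -R.expect y φ := by
  simp [expect]

lemma ConvexLE.expect_eq {R : LabelRandomizer ι J} {S : LabelRandomizer ι J'} (h : R.ConvexLE S)
    (y : ι) {φ : ℝ → ℝ} (hconv : ConvexOn ℝ univ φ) (hconc : ConcaveOn ℝ univ φ) :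
    R.expect y φ = S.expect y φ := by
  have hneg := h y (-φ) hconc.neg
  rw [expect_neg, expect_neg, neg_le_neg_iff] at hneg
  exact (h y φ hconv).antisymm hneg

lemma ConvexLE.isUnbiased {R : LabelRandomizer ι J} {S : LabelRandomizer ι J'} {v : ι → ℝ}
    (h : R.ConvexLE S) (hS : S.IsUnbiased v) : R.IsUnbiased v where
  expect_one y := (h.expect_eq y (convexOn_const 1 convex_univ)
    (concaveOn_const 1 convex_univ)).trans (hS.expect_one y)
  expect_id y := (h.expect_eq y (convexOn_id convex_univ) (concaveOn_id convex_univ)).trans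
    (hS.expect_id y)

end Basic

section Patterns

variable {ι J : Type*} [DecidableEq ι]

/-- The randomizer whose column `j` has minimum `k j`, set of `U` entries `τ j`, and label `x j`. -/
def ofPatterns (E : ℝ) (τ : J → Finset ι) (k x : J → ℝ) : LabelRandomizer ι J where
  prob y j := k j * level E (τ j) y
  label := x

/-- The total weight of the columns of `ofPatterns E τ k x` with pattern `T`. -/
def mergeWeight [Fintype J] (τ : J → Finset ι) (k : J → ℝ) (T : Finset ι) : ℝ :=
  ∑ j with τ j = T, k j

/-- The common barycentre of the columns of `ofPatterns E τ k x` with pattern `T`; it is `0` when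
they have no weight. -/
noncomputable def mergeLabel [Fintype J] (τ : J → Finset ι) (k x : J → ℝ) (T : Finset ι) : ℝ :=
  ({j | τ j = T} : Finset J).centerMass k x

variable [Fintype J] {E : ℝ} {τ : J → Finset ι} {k x : J → ℝ}

lemma mergeWeight_nonneg (hk : ∀ j, 0 ≤ k j) (T : Finset ι) : 0 ≤ mergeWeight τ k T :=
  Finset.sum_nonneg fun j _ => hk j

lemma abs_mergeLabel_le (hk : ∀ j, 0 ≤ k j) {B : ℝ} (hB : ∀ j, |x j| ≤ B) (hB0 : 0 ≤ B)
    (T : Finset ι) : |mergeLabel τ k x T| ≤ B :=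
  abs_centerMass_le (fun j _ => hk j) hB hB0

variable [Fintype ι]

lemma expect_ofPatterns_comp_of_injective (hτ : Function.Injective τ) (E : ℝ) {k : Finset ι → ℝ}
    (x : Finset ι → ℝ) (hk : ∀ T ∉ range τ, k T = 0) (y : ι) (φ : ℝ → ℝ) :
    (ofPatterns E τ (k ∘ τ) (x ∘ τ)).expect y φ = (ofPatterns E id k x).expect y φ :=
  Fintype.sum_of_injective τ hτ _ _ (fun T hT => by simp [ofPatterns, hk T hT]) fun _ => rfl

lemma expect_ofPatterns_eq_sum_fiber (E : ℝ) (τ : J → Finset ι) (k x : J → ℝ) (y : ι)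
    (φ : ℝ → ℝ) : (ofPatterns E τ k x).expect y φ =
      ∑ T, level E T y * ∑ j with τ j = T, k j * φ (x j) := by
  rw [expect, ← Finset.sum_fiberwise (g := τ)]
  refine Finset.sum_congr rfl fun T _ => ?_
  rw [Finset.mul_sum]
  refine Finset.sum_congr rfl fun j hj => ?_
  rw [← (Finset.mem_filter.1 hj).2]
  simp only [ofPatterns]
  ring

lemma expect_merge (E : ℝ) (τ : J → Finset ι) (k x : J → ℝ) (y : ι) (φ : ℝ → ℝ) :
    (ofPatterns E id (mergeWeight τ k) (mergeLabel τ k x)).expect y φ =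
      ∑ T, level E T y * ((∑ j with τ j = T, k j) *
        φ (({j | τ j = T} : Finset J).centerMass k x)) :=
  Finset.sum_congr rfl fun T _ => by simp only [ofPatterns, id, mergeWeight, mergeLabel]; ring

lemma merge_convexLE (hE : 0 < E) (hk : ∀ j, 0 ≤ k j) :
    (ofPatterns E id (mergeWeight τ k) (mergeLabel τ k x)).ConvexLE (ofPatterns E τ k x) := by
  intro y φ hφ
  rw [expect_merge, expect_ofPatterns_eq_sum_fiber]
  exact Finset.sum_le_sum fun T _ => mul_le_mul_of_nonneg_left
    (sum_mul_map_centerMass_le (fun j _ => hk j) hφ) (level_pos hE T y).le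

lemma expect_sq_eq_merge_add_variance (E : ℝ) (hk : ∀ j, 0 ≤ k j) (y : ι) :
    (ofPatterns E τ k x).expect y (fun s => s ^ 2) =
      (ofPatterns E id (mergeWeight τ k) (mergeLabel τ k x)).expect y (fun s => s ^ 2) +
        ∑ j, k j * level E (τ j) y * (x j - mergeLabel τ k x (τ j)) ^ 2 := by
  have hvariance : ∑ j, k j * level E (τ j) y * (x j - mergeLabel τ k x (τ j)) ^ 2 =
      ∑ T, level E T y * ∑ j with τ j = T,
        k j * (x j - ({i | τ i = T} : Finset J).centerMass k x) ^ 2 := by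
    rw [← Finset.sum_fiberwise (g := τ)]
    refine Finset.sum_congr rfl fun T _ => ?_
    rw [Finset.mul_sum]
    refine Finset.sum_congr rfl fun j hj => ?_
    rw [mergeLabel, (Finset.mem_filter.1 hj).2]
    ring
  rw [expect_merge, expect_ofPatterns_eq_sum_fiber, hvariance, ← Finset.sum_add_distrib]
  refine Finset.sum_congr rfl fun T _ => ?_
  rw [sum_mul_sq_eq_add_variance fun j _ => hk j]
  ring

lemma label_eq_mergeLabel_of_expect_sq_le (hE : 0 < E) (hk : ∀ j, 0 ≤ k j) {y : ι}
    (hle : (ofPatterns E τ k x).expect y (fun s => s ^ 2) ≤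
      (ofPatterns E id (mergeWeight τ k) (mergeLabel τ k x)).expect y (fun s => s ^ 2))
    {j : J} (hj : 0 < k j) : x j = mergeLabel τ k x (τ j) := by
  have hnonneg (i : J) : 0 ≤ k i * level E (τ i) y * (x i - mergeLabel τ k x (τ i)) ^ 2 :=
    mul_nonneg (mul_nonneg (hk i) (level_pos hE _ _).le) (sq_nonneg _)
  rw [expect_sq_eq_merge_add_variance E hk] at hle
  have hzero := (Finset.sum_eq_zero_iff_of_nonneg fun i _ => hnonneg i).1
    (le_antisymm (by linarith) (Finset.sum_nonneg fun i _ => hnonneg i)) j (Finset.mem_univ j)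
  have hpos := mul_pos hj (level_pos hE (τ j) y)
  exact sub_eq_zero.1 (pow_eq_zero_iff two_ne_zero |>.1
    ((mul_eq_zero.1 hzero).resolve_left hpos.ne'))

end Patterns

section Decomposition

variable {ι J : Type*} [DecidableEq ι] [Fintype ι]

/- Including each `z` in a random set `T` independently with probability `p z` gives
`level E T y` the mean `1 + (E - 1) * p y`. -/
lemma sum_prod_mul_level (E : ℝ) (p : ι → ℝ) (y : ι) :
    ∑ T, ((∏ z ∈ T, p z) * ∏ z ∈ Tᶜ, (1 - p z)) * level E T y = 1 + (E - 1) * p y := by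
  have hlevel (T : Finset ι) : level E T y = ∏ z ∈ T, if z = y then E else 1 := by
    rw [Finset.prod_ite_eq', level]
  calc ∑ T, ((∏ z ∈ T, p z) * ∏ z ∈ Tᶜ, (1 - p z)) * level E T y
    _ = ∑ T, (∏ z ∈ T, p z * if z = y then E else 1) * ∏ z ∈ Tᶜ, (1 - p z) := by
      simp only [hlevel, Finset.prod_mul_distrib, mul_right_comm]
    _ = ∏ z, (p z * (if z = y then E else 1) + (1 - p z)) := (Fintype.prod_add _ _).symm
    _ = ∏ z, if z = y then 1 + (E - 1) * p y else 1 :=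
      Finset.prod_congr rfl fun z _ => by split_ifs with h <;> [subst h; skip] <;> ring
    _ = 1 + (E - 1) * p y := by simp

lemma exists_level_decomposition [Nonempty ι] {E : ℝ} (hE : 1 < E) {c : ι → ℝ}
    (hc : ∀ y, 0 ≤ c y) (hdp : ∀ y y', c y' ≤ E * c y) :
    ∃ k : Finset ι → ℝ, (∀ T, 0 ≤ k T) ∧ ∀ y, ∑ T, k T * level E T y = c y := by
  obtain ⟨y₀, hmin⟩ := Finite.exists_min c
  rcases (hc y₀).eq_or_lt with h0 | hq
  · refine ⟨0, fun _ => le_rfl, fun y => ?_⟩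
    simp [le_antisymm (by simpa [← h0] using hdp y₀ y) (hc y)]
  have hscale : 0 < (E - 1) * c y₀ := mul_pos (sub_pos.2 hE) hq
  set p : ι → ℝ := fun y => (c y - c y₀) / ((E - 1) * c y₀) with hp
  have hp0 (y : ι) : 0 ≤ p y := div_nonneg (sub_nonneg.2 (hmin y)) hscale.le
  have hp1 (y : ι) : 0 ≤ 1 - p y :=
    sub_nonneg.2 ((div_le_one hscale).2 (by linarith [hdp y₀ y]))
  refine ⟨fun T => c y₀ * ((∏ z ∈ T, p z) * ∏ z ∈ Tᶜ, (1 - p z)), fun T => ?_, fun y => ?_⟩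
  · exact mul_nonneg hq.le (mul_nonneg (Finset.prod_nonneg fun z _ => hp0 z)
      (Finset.prod_nonneg fun z _ => hp1 z))
  · simp only [mul_assoc (c y₀)]
    rw [← Finset.mul_sum, sum_prod_mul_level, hp]
    have hE' : E - 1 ≠ 0 := (sub_pos.2 hE).ne'
    field_simp
    ring

variable [Fintype J]

lemma IsDP.exists_ofPatterns_expect_eq [Nonempty ι] {E : ℝ} (hE : 1 < E) {R : LabelRandomizer ι J}
    (hR : R.IsDP E) : ∃ k : J × Finset ι → ℝ, (∀ p, 0 ≤ k p) ∧
      ∀ y φ, (ofPatterns E Prod.snd k (R.label ∘ Prod.fst)).expect y φ = R.expect y φ := by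
  choose k hk hsum using fun j =>
    exists_level_decomposition hE (fun y => hR.prob_nonneg y j) (hR.prob_le j)
  refine ⟨fun p => k p.1 p.2, fun p => hk p.1 p.2, fun y φ => ?_⟩
  simp only [expect, ofPatterns, Fintype.sum_prod_type, Function.comp_apply, ← Finset.sum_mul, hsum]

end Decomposition

section Minimizer

variable {ι J J' : Type*} [DecidableEq ι] [Fintype ι] [Fintype J] [Fintype J'] {E B : ℝ}
  {R : LabelRandomizer ι J}

/-- The randomizers with one column per pattern, given by their pairs of weights and labels, that
improve on `R` in the convex order and whose labels are bounded by `B`. -/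
def improvements (E B : ℝ) (R : LabelRandomizer ι J) : Set ((Finset ι → ℝ) × (Finset ι → ℝ)) :=
  {p | (∀ T, 0 ≤ p.1 T) ∧ (∀ T, |p.2 T| ≤ B) ∧ (ofPatterns E id p.1 p.2).ConvexLE R}

lemma merge_mem_improvements (hE : 0 < E) {τ : J' → Finset ι} {k x : J' → ℝ} (hk : ∀ j, 0 ≤ k j)
    (hB : ∀ j, |x j| ≤ B) (hB0 : 0 ≤ B) (hle : (ofPatterns E τ k x).ConvexLE R) :
    (mergeWeight τ k, mergeLabel τ k x) ∈ improvements E B R :=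
  ⟨mergeWeight_nonneg hk, abs_mergeLabel_le hk hB hB0, (merge_convexLE hE hk).trans hle⟩

lemma IsDP.exists_improvement [Nonempty ι] (hE : 1 < E) (hR : R.IsDP E) :
    ∃ B, 0 ≤ B ∧ (improvements E B R).Nonempty := by
  obtain ⟨k, hk, hexpect⟩ := hR.exists_ofPatterns_expect_eq hE
  refine ⟨∑ j, |R.label j|, Finset.sum_nonneg fun j _ => abs_nonneg _, _,
    merge_mem_improvements (zero_lt_one.trans hE) hk (fun p => ?_)
      (Finset.sum_nonneg fun j _ => abs_nonneg _) fun y φ _ => (hexpect y φ).le⟩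
  exact Finset.single_le_sum (f := fun j => |R.label j|) (fun j _ => abs_nonneg _)
    (Finset.mem_univ p.1)

lemma continuous_expect_ofPatterns (E : ℝ) (y : ι) {φ : ℝ → ℝ} (hφ : Continuous φ) :
    Continuous fun p : (Finset ι → ℝ) × (Finset ι → ℝ) =>
      (ofPatterns E id p.1 p.2).expect y φ := by
  simp only [expect, ofPatterns]
  fun_prop

lemma isClosed_improvements (E B : ℝ) (R : LabelRandomizer ι J) :
    IsClosed (improvements E B R) := by
  have hweight : IsClosed {p : (Finset ι → ℝ) × (Finset ι → ℝ) | ∀ T, 0 ≤ p.1 T} := by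
    simp only [ofPred_forall]
    exact isClosed_iInter fun T => isClosed_le continuous_const (by fun_prop)
  have hlabel : IsClosed {p : (Finset ι → ℝ) × (Finset ι → ℝ) | ∀ T, |p.2 T| ≤ B} := by
    simp only [ofPred_forall]
    exact isClosed_iInter fun T => isClosed_le (by fun_prop) continuous_const
  have horder : IsClosed {p : (Finset ι → ℝ) × (Finset ι → ℝ) |
      (ofPatterns E id p.1 p.2).ConvexLE R} := by
    simp only [ConvexLE, ofPred_forall]
    exact isClosed_iInter fun y => isClosed_iInter fun φ => isClosed_iInter fun hφ =>
      isClosed_le (continuous_expect_ofPatterns E y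
        (continuousOn_univ.1 (hφ.continuousOn isOpen_univ))) continuous_const
  exact hweight.inter (hlabel.inter horder)

lemma isCompact_improvements [Nonempty ι] (hE : 1 ≤ E) (B : ℝ) (R : LabelRandomizer ι J) :
    IsCompact (improvements E B R) := by
  obtain ⟨y⟩ := ‹Nonempty ι›
  have hbox : IsCompact ((univ.pi fun _ : Finset ι => Icc 0 (R.expect y fun _ => 1)) ×ˢ
      univ.pi fun _ : Finset ι => Icc (-B) B) :=
    (isCompact_univ_pi fun _ => isCompact_Icc).prod (isCompact_univ_pi fun _ => isCompact_Icc)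
  refine hbox.of_isClosed_subset (isClosed_improvements E B R) ?_
  rintro ⟨k, x⟩ ⟨hk, hx, hle⟩
  refine ⟨fun T _ => ⟨hk T, ?_⟩, fun T _ => abs_le.1 (hx T)⟩
  calc k T ≤ k T * level E T y := le_mul_of_one_le_right (hk T) (one_le_level hE T y)
    _ ≤ (ofPatterns E id k x).expect y fun _ => 1 := by
      simp only [expect, mul_one]
      exact Finset.single_le_sum (f := fun T => k T * level E T y) (fun S _ =>
        mul_nonneg (hk S) (level_pos (by linarith) S y).le) (Finset.mem_univ T)
    _ ≤ R.expect y fun _ => 1 := hle y _ (convexOn_const 1 convex_univ)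

/-- The improvement on `R` given by `k` and `x` has the least second moment on the input `y₀`. Since
the square is strictly convex, such an improvement cannot be improved further. -/
structure IsOptimal (E B : ℝ) (R : LabelRandomizer ι J) (y₀ : ι) (k x : Finset ι → ℝ) : Prop where
  weight_nonneg : ∀ T, 0 ≤ k T
  abs_label_le : ∀ T, |x T| ≤ B
  convexLE : (ofPatterns E id k x).ConvexLE R
  expect_sq_le : ∀ p ∈ improvements E B R, (ofPatterns E id k x).expect y₀ (fun s => s ^ 2) ≤
    (ofPatterns E id p.1 p.2).expect y₀ fun s => s ^ 2

lemma exists_isOptimal (hE : 1 ≤ E) (hne : (improvements E B R).Nonempty) (y₀ : ι) :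
    ∃ k x, IsOptimal E B R y₀ k x := by
  have : Nonempty ι := ⟨y₀⟩
  obtain ⟨⟨k, x⟩, hmem, hmin⟩ := (isCompact_improvements hE B R).exists_isMinOn hne
    (continuous_expect_ofPatterns E y₀ (continuous_pow 2)).continuousOn
  exact ⟨k, x, hmem.1, hmem.2.1, hmem.2.2, fun p hp => hmin hp⟩

variable {k x : Finset ι → ℝ} {y₀ : ι} {v : ι → ℝ}

lemma IsOptimal.of_convexLE {k' x' : Finset ι → ℝ} (h : IsOptimal E B R y₀ k x)
    (hk' : ∀ T, 0 ≤ k' T) (hx' : ∀ T, |x' T| ≤ B)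
    (hle : (ofPatterns E id k' x').ConvexLE (ofPatterns E id k x)) : IsOptimal E B R y₀ k' x' where
  weight_nonneg := hk'
  abs_label_le := hx'
  convexLE := hle.trans h.convexLE
  expect_sq_le p hp := (hle y₀ _ even_two.convexOn_pow).trans (h.expect_sq_le p hp)

lemma IsOptimal.label_eq_of_expect_eq (h : IsOptimal E B R y₀ k x) (hE : 0 < E)
    (hB0 : 0 ≤ B) {τ : J' → Finset ι} {k' x' : J' → ℝ}
    (hk' : ∀ j, 0 ≤ k' j) (hx' : ∀ j, |x' j| ≤ B)
    (hexpect : ∀ y φ, (ofPatterns E τ k' x').expect y φ = (ofPatterns E id k x).expect y φ)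
    {i j : J'} (hi : 0 < k' i) (hj : 0 < k' j) (hij : τ i = τ j) : x' i = x' j := by
  have hle : (ofPatterns E τ k' x').ConvexLE R := fun y φ hφ =>
    (hexpect y φ).trans_le (h.convexLE y φ hφ)
  have hsq := (hexpect y₀ _).trans_le (h.expect_sq_le _ (merge_mem_improvements hE hk' hx' hB0 hle))
  rw [label_eq_mergeLabel_of_expect_sq_le hE hk' hsq hi, hij,
    label_eq_mergeLabel_of_expect_sq_le hE hk' hsq hj]

/- A constant column can be shared out between the patterns `S` and `Sᶜ` in equal parts. -/
lemma IsOptimal.label_eq_of_constant_pattern (h : IsOptimal E B R y₀ k x) (hE : 0 < E) (hB0 : 0 ≤ B)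
    {T : Finset ι} {l : ℝ} (hl : 0 < l) (hconst : ∀ y, level E T y = l) (hT : 0 < k T)
    {S : Finset ι} (hS : 0 < k S) : x S = x T := by
  rcases eq_or_ne S T with rfl | hST
  · rfl
  set c := k T * l / (1 + E)
  have hcpos : 0 < c := by positivity
  refine h.label_eq_of_expect_eq (τ := Sum.elim id fun b => cond b S Sᶜ)
    (k' := Sum.elim (Function.update k T 0) fun _ => c) (x' := Sum.elim x fun _ => x T)
    hE hB0 ?_ ?_ (fun y φ => ?_) (i := .inl S) (j := .inr true) ?_ hcpos rfl
  · rintro (U | _)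
    · by_cases hU : U = T <;> simp [hU, h.weight_nonneg U]
    · exact hcpos.le
  · rintro (U | _)
    exacts [h.abs_label_le U, h.abs_label_le T]
  · have hcompl : level E S y + level E Sᶜ y = 1 + E := by
      by_cases hy : y ∈ S <;> simp [level, hy, add_comm]
    have hupdate : ∑ U, Function.update k T 0 U * level E U y * φ (x U) =
        ∑ U, k U * level E U y * φ (x U) - k T * l * φ (x T) := by
      rw [eq_sub_iff_add_eq, ← hconst y]
      simp only [← Finset.add_sum_erase _ _ (Finset.mem_univ T), Function.update_self, zero_mul,
        zero_add, add_comm (∑ _ ∈ _, _)]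
      congr 1
      refine Finset.sum_congr rfl fun _ hU => ?_
      rw [Function.update_of_ne (Finset.ne_of_mem_erase hU)]
    simp only [expect, ofPatterns, Fintype.sum_sum_type, Fintype.sum_bool, Sum.elim_inl,
      Sum.elim_inr, cond_true, cond_false, id, hupdate]
    have hsplit : c * (1 + E) = k T * l := div_mul_cancel₀ _ (by positivity)
    linear_combination (c * φ (x T)) * hcompl + φ (x T) * hsplit
  · simpa [Function.update_of_ne hST] using hS

lemma IsOptimal.weight_eq_zero_of_constant_pattern (h : IsOptimal E B R y₀ k x) (hE : 0 < E)
    (hB0 : 0 ≤ B) (hR : R.IsUnbiased v) (hv : ∃ y y', v y ≠ v y') {T : Finset ι} {l : ℝ}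
    (hl : 0 < l) (hconst : ∀ y, level E T y = l) : k T = 0 := by
  by_contra hT
  have hunbiased := h.convexLE.isUnbiased hR
  have hmean (y : ι) : v y = x T := by
    calc v y = ∑ S, k S * level E S y * x S := (hunbiased.expect_id y).symm
      _ = ∑ S, k S * level E S y * x T := by
        refine Finset.sum_congr rfl fun S _ => ?_
        rcases (h.weight_nonneg S).eq_or_lt with h0 | hS
        · simp [← h0]
        · rw [h.label_eq_of_constant_pattern hE hB0 hl hconst ((h.weight_nonneg T).lt_of_ne' hT) hS]
      _ = x T := by
        have htotal : ∑ S, k S * level E S y = 1 := by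
          simpa only [expect, ofPatterns, mul_one, id] using hunbiased.expect_one y
        rw [← Finset.sum_mul, htotal, one_mul]
  obtain ⟨y, y', hne⟩ := hv
  exact hne ((hmean y).trans (hmean y').symm)

end Minimizer

end LabelRandomizer

section StrongSetOrder

variable {ι : Type*} [LinearOrder ι] {S T : Finset ι}

/-- Veinott's strong set order: replacing a pair `y ∈ S`, `y' ∈ T` by its minimum and maximum keeps
the minimum in `S` and the maximum in `T`. It is a partial order only on nonempty sets. -/
def StrongSetLE (S T : Finset ι) : Prop := ∀ y ∈ S, ∀ y' ∈ T, y' ≤ y → y' ∈ S ∧ y ∈ T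

lemma StrongSetLE.subset_of_le (hST : StrongSetLE S T) (hTS : StrongSetLE T S)
    (hT : T.Nonempty) : S ⊆ T := by
  obtain ⟨z, hz⟩ := hT
  intro y hy
  rcases le_total z y with h | h
  exacts [(hST y hy z hz h).2, (hTS z hz y hy h).1]

lemma StrongSetLE.antisymm (hST : StrongSetLE S T) (hTS : StrongSetLE T S) (hS : S.Nonempty)
    (hT : T.Nonempty) : S = T :=
  (hST.subset_of_le hTS hT).antisymm (hTS.subset_of_le hST hS)

lemma StrongSetLE.min'_le_min' (hST : StrongSetLE S T) (hS : S.Nonempty) (hT : T.Nonempty) :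
    S.min' hS ≤ T.min' hT := by
  by_contra! h
  exact h.not_ge (S.min'_le _ (hST _ (S.min'_mem hS) _ (T.min'_mem hT) h.le).1)

lemma StrongSetLE.max'_le_max' (hST : StrongSetLE S T) (hS : S.Nonempty) (hT : T.Nonempty) :
    S.max' hS ≤ T.max' hT := by
  by_contra! h
  exact h.not_ge (T.le_max' _ (hST _ (S.max'_mem hS) _ (T.max'_mem hT) h.le).2)

lemma subset_of_min'_eq_of_max'_eq (hTc : (T : Set ι).OrdConnected) (hS : S.Nonempty)
    (hT : T.Nonempty) (hmin : S.min' hS = T.min' hT) (hmax : S.max' hS = T.max' hT) : S ⊆ T :=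
  fun y hy => hTc.out (T.min'_mem hT) (T.max'_mem hT)
    ⟨hmin ▸ S.min'_le y hy, hmax ▸ S.le_max' y hy⟩

lemma StrongSetLE.min'_lt_min'_or_max'_lt_max' (hST : StrongSetLE S T)
    (hSc : (S : Set ι).OrdConnected) (hTc : (T : Set ι).OrdConnected) (hne : S ≠ T)
    (hS : S.Nonempty) (hT : T.Nonempty) :
    S.min' hS < T.min' hT ∨ S.max' hS < T.max' hT := by
  by_contra! h
  have hmin := (hST.min'_le_min' hS hT).antisymm h.1
  have hmax := (hST.max'_le_max' hS hT).antisymm h.2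
  exact hne ((subset_of_min'_eq_of_max'_eq hTc hS hT hmin hmax).antisymm
    (subset_of_min'_eq_of_max'_eq hSc hT hS hmin.symm hmax.symm))

end StrongSetOrder

section Active

variable {ι : Type*} [Fintype ι] {t : ι → ℝ} {A u u' : ℝ} {y : ι}

/-- The labels whose window, of common length `A` and starting at `t y`, contains the point `u`. -/
noncomputable def active (t : ι → ℝ) (A u : ℝ) : Finset ι := {y | t y < u ∧ u ≤ t y + A}

lemma mem_active : y ∈ active t A u ↔ u ∈ Ioc (t y) (t y + A) := by
  simp [active]

lemma measurableSet_preimage_active (t : ι → ℝ) (A : ℝ) (T : Finset ι) :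
    MeasurableSet (active t A ⁻¹' {T}) := by
  have hinter : active t A ⁻¹' {T} = ⋂ y, {u | u ∈ Ioc (t y) (t y + A) ↔ y ∈ T} := by
    ext u
    simp [Finset.ext_iff, mem_active]
  rw [hinter]
  exact .iInter fun y => measurableSet_Ioc.iff (.const _)

variable [LinearOrder ι]

lemma strongSetLE_active (ht : Monotone t) (huu' : u ≤ u') :
    StrongSetLE (active t A u) (active t A u') := by
  simp only [StrongSetLE, mem_active, mem_Ioc]
  intro y hy y' hy' hle
  have := ht hle
  exact ⟨⟨by linarith, by linarith⟩, ⟨by linarith, by linarith⟩⟩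

lemma ordConnected_active (ht : Monotone t) : (active t A u : Set ι).OrdConnected := by
  refine ⟨fun y hy y'' hy'' y' hy' => ?_⟩
  simp only [Finset.mem_coe, mem_active, mem_Ioc] at *
  exact ⟨(ht hy'.2).trans_lt hy''.1, hy.2.trans (by linarith [ht hy'.1])⟩

end Active

namespace LabelRandomizer

section Windowing

variable {ι J : Type*} [DecidableEq ι] [Fintype J] {E : ℝ}

lemma expect_ofPatterns_eq_setIntegral {X : Type*} [MeasurableSpace X] {μ : Measure X} (E : ℝ)
    (τ : J → Finset ι) (x : J → ℝ) {p : X → J} (hp : ∀ j, MeasurableSet (p ⁻¹' {j})) {s : Set X}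
    (hs : μ s ≠ ⊤) (y : ι) (φ : ℝ → ℝ) :
    (ofPatterns E τ (fun j => μ.real (s ∩ p ⁻¹' {j})) x).expect y φ =
      (∫ u in s, φ (x (p u)) ∂μ) + (E - 1) * ∫ u in s ∩ {u | y ∈ τ (p u)}, φ (x (p u)) ∂μ := by
  let : MeasurableSpace J := ⊤
  have : Fact (μ s < ⊤) := ⟨hs.lt_top⟩
  have hpm : Measurable p := measurable_to_countable' hp
  have hint : IntegrableOn (fun u => φ (x (p u))) s μ :=
    (Integrable.of_finite (f := fun j => φ (x j))).comp_measurable hpm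
  rw [← setIntegral_level_mul E (T := fun u => τ (p u)) (hpm (t := {j | y ∈ τ j}) trivial) hint,
    setIntegral_comp_eq_sum hp hs (fun j => level E (τ j) y * φ (x j))]
  simp only [expect, ofPatterns, mul_assoc]

lemma exists_layout_expect_eq [Nonempty J] (E : ℝ) (τ : J → Finset ι) {k : J → ℝ} (x : J → ℝ)
    (hk : ∀ j, 0 ≤ k j) : ∃ (W : ℝ) (idx : ℝ → J), 0 ≤ W ∧ Monotone (x ∘ idx) ∧
      (∀ j, MeasurableSet (idx ⁻¹' {j})) ∧ ∀ y φ, (ofPatterns E τ k x).expect y φ =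
        (∫ u in Ioc 0 W, φ (x (idx u))) +
          (E - 1) * ∫ u in Ioc 0 W ∩ {u | y ∈ τ (idx u)}, φ (x (idx u)) := by
  obtain ⟨idx, hmono, hidx, hvol⟩ := exists_layout x hk
  refine ⟨∑ j, k j, idx, Finset.sum_nonneg fun j _ => hk j, hmono, hidx, fun y φ => ?_⟩
  rw [← expect_ofPatterns_eq_setIntegral E τ x hidx measure_Ioc_lt_top.ne]
  simp only [hvol]

/-- The weights, on pairs of a column `j` and a new pattern `T`, obtained by moving the windows on
the layout `idx` of total length `W` to the starting points `t`. -/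
noncomputable def windowWeight [Fintype ι] (W : ℝ) (idx : ℝ → J) (t : ι → ℝ) (A : ℝ)
    (p : J × Finset ι) : ℝ :=
  volume.real (Ioc 0 W ∩ (fun u => (idx u, active t A u)) ⁻¹' {p})

variable [Fintype ι]

lemma expect_windowWeight {W A : ℝ} {idx : ℝ → J} (hidx : ∀ j, MeasurableSet (idx ⁻¹' {j}))
    {t : ι → ℝ} {y : ι} (hty : t y ∈ Icc 0 (W - A)) (x : J → ℝ) (φ : ℝ → ℝ) :
    (ofPatterns E Prod.snd (windowWeight W idx t A) (x ∘ Prod.fst)).expect y φ =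
      (∫ u in Ioc 0 W, φ (x (idx u))) + (E - 1) * ∫ u in Ioc (t y) (t y + A), φ (x (idx u)) := by
  have hmeas (p : J × Finset ι) :
      MeasurableSet ((fun u => (idx u, active t A u)) ⁻¹' {p}) := by
    rw [← Set.singleton_prod_singleton, mk_preimage_prod]
    exact (hidx p.1).inter (measurableSet_preimage_active t A p.2)
  have hwindow : Ioc 0 W ∩ {u | y ∈ active t A u} = Ioc (t y) (t y + A) := by
    ext u
    simp only [mem_inter_iff, mem_ofPred_eq, mem_active, and_iff_right_iff_imp, mem_Ioc]
    exact fun hu => ⟨hty.1.trans_lt hu.1, hu.2.trans (by linarith [hty.2])⟩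
  rw [← hwindow]
  exact expect_ofPatterns_eq_setIntegral E Prod.snd (x ∘ Prod.fst) hmeas
    measure_Ioc_lt_top.ne y φ

/- The columns, laid out by increasing label, turn the expectation of `φ` on `y` into an integral
with extra mass on the positions whose pattern contains `y`. The length of this set does not depend
on `y`, and it can be traded for a window of the same length and barycentre. -/
lemma exists_windowing [LinearOrder ι] [Nonempty J] (hE : 1 < E) {τ : J → Finset ι} {k x : J → ℝ}
    (hk : ∀ j, 0 ≤ k j) {v : ι → ℝ} (hv : StrictMono v)
    (hunbiased : (ofPatterns E τ k x).IsUnbiased v) :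
    ∃ (W A : ℝ) (idx : ℝ → J) (t : ι → ℝ), Monotone (x ∘ idx) ∧ StrictMono t ∧
      (ofPatterns E Prod.snd (windowWeight W idx t A) (x ∘ Prod.fst)).ConvexLE
        (ofPatterns E τ k x) := by
  obtain ⟨W, idx, hW, hmono, hidx, hexpect⟩ := exists_layout_expect_eq E τ x hk
  set C : ι → Set ℝ := fun y => Ioc 0 W ∩ {u | y ∈ τ (idx u)}
  have hCsub (y : ι) : C y ⊆ Ioc 0 W := inter_subset_left
  have hCmeas (y : ι) : MeasurableSet (C y) := by
    let : MeasurableSpace J := ⊤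
    exact measurableSet_Ioc.inter (measurable_to_countable' hidx (t := {j | y ∈ τ j}) trivial)
  have hE' : 0 < E - 1 := sub_pos.2 hE
  obtain ⟨A, hA⟩ : ∃ A, ∀ y, volume.real (C y) = A := by
    refine ⟨(1 - W) / (E - 1), fun y => ?_⟩
    have htotal := hexpect y fun _ => 1
    rw [hunbiased.expect_one, setIntegral_const, setIntegral_const,
      Real.volume_real_Ioc_of_le hW] at htotal
    rw [eq_div_iff hE'.ne']
    simp only [smul_eq_mul, mul_one, sub_zero] at htotal
    linarith
  have hwindow (y : ι) := exists_window_barycentre_eq hmono (hCmeas y) (hCsub y) hW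
  simp only [hA] at hwindow
  choose t ht hbary using hwindow
  refine ⟨W, A, idx, t, hmono, fun y y' hyy' => ?_, fun y φ hφ => ?_⟩
  · by_contra! hle
    have hmean (z : ι) : v z = (∫ u in Ioc 0 W, x (idx u)) +
        (E - 1) * ∫ u in Ioc (t z) (t z + A), x (idx u) := by
      rw [← hunbiased.expect_id z, hexpect]
      exact congrArg (fun r => _ + (E - 1) * r) (hbary z).symm
    have hshift := monotone_setIntegral_window hmono (hA y ▸ measureReal_nonneg) hle
    have := mul_le_mul_of_nonneg_left hshift hE'.le
    simp only [Function.comp_apply] at this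
    linarith [hv hyy', hmean y, hmean y']
  · rw [expect_windowWeight hidx (ht y), hexpect]
    have hconvex := setIntegral_window_le_of_barycentre_eq hmono (hCmeas y)
      ((Metric.isBounded_Ioc 0 W).subset (hCsub y)) (by rw [hA]; exact hbary y) hφ
    rw [hA] at hconvex
    exact add_le_add_right (mul_le_mul_of_nonneg_left hconvex hE'.le) _

/-- The patterns carrying weight are those cut out by the points of the line in windows of length
`A` starting at `t`, and their labels increase along the line. -/
structure IsWindowed (k x : Finset ι → ℝ) (t : ι → ℝ) (A : ℝ) : Prop where
  exists_active_eq : ∀ T, 0 < k T → ∃ u, active t A u = T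
  label_le : ∀ u u', u ≤ u' → (active t A u).Nonempty → (active t A u').Nonempty →
    0 < k (active t A u) → 0 < k (active t A u') → x (active t A u) ≤ x (active t A u')

variable {W A : ℝ} {idx : ℝ → J} {t : ι → ℝ} {x : J → ℝ} {T : Finset ι}

lemma exists_label_le_mergeLabel (hT : 0 < mergeWeight Prod.snd (windowWeight W idx t A) T) :
    ∃ u, active t A u = T ∧
      x (idx u) ≤ mergeLabel Prod.snd (windowWeight W idx t A) (x ∘ Prod.fst) T := by
  obtain ⟨p, hpT, hp, hle⟩ := exists_pos_le_centerMass (x := x ∘ Prod.fst)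
    (fun p _ => measureReal_nonneg) hT
  obtain ⟨u, -, rfl⟩ := nonempty_of_measureReal_ne_zero hp.ne'
  exact ⟨u, (Finset.mem_filter.1 hpT).2, hle⟩

lemma exists_mergeLabel_le_label (hT : 0 < mergeWeight Prod.snd (windowWeight W idx t A) T) :
    ∃ u, active t A u = T ∧
      mergeLabel Prod.snd (windowWeight W idx t A) (x ∘ Prod.fst) T ≤ x (idx u) := by
  obtain ⟨p, hpT, hp, hle⟩ := exists_pos_centerMass_le (x := x ∘ Prod.fst)
    (fun p _ => measureReal_nonneg) hT
  obtain ⟨u, -, rfl⟩ := nonempty_of_measureReal_ne_zero hp.ne'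
  exact ⟨u, (Finset.mem_filter.1 hpT).2, hle⟩

lemma isWindowed_merge [LinearOrder ι] (hmono : Monotone (x ∘ idx)) (ht : Monotone t) :
    IsWindowed (mergeWeight Prod.snd (windowWeight W idx t A))
      (mergeLabel Prod.snd (windowWeight W idx t A) (x ∘ Prod.fst)) t A where
  exists_active_eq T hT := by
    obtain ⟨u, hu, -⟩ := exists_label_le_mergeLabel (x := x) hT
    exact ⟨u, hu⟩
  label_le u u' huu' hu hu' hk hk' := by
    obtain ⟨w, hw, hle⟩ := exists_mergeLabel_le_label (x := x) hk
    obtain ⟨w', hw', hle'⟩ := exists_label_le_mergeLabel (x := x) hk'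
    rcases le_total w w' with hww' | hww'
    · exact hle.trans ((hmono hww').trans hle')
    · have hback := strongSetLE_active (A := A) ht hww'
      rw [hw, hw'] at hback
      rw [(strongSetLE_active ht huu').antisymm hback hu hu']

end Windowing

end LabelRandomizer

lemma exists_strictMono_enumeration {α β : Type*} [LinearOrder α] [Finite β] {p : α → β}
    {s : Set β} (hs : s ⊆ range p) : ∃ (m : ℕ) (u : Fin m → α),
      StrictMono u ∧ Function.Injective (p ∘ u) ∧ range (p ∘ u) = s := by
  obtain ⟨r, -, hbij⟩ := (show SurjOn p univ s by rwa [SurjOn, image_univ]).exists_bijOn_subset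
  have hr : r.Finite := hbij.finite_iff_finite.2 s.toFinite
  set u := hr.toFinset.orderEmbOfFin rfl with hu
  have hrange : range u = r := by
    rw [hu, Finset.range_orderEmbOfFin, hr.coe_toFinset]
  have hmem (i) : u i ∈ r := hrange.subset (mem_range_self i)
  exact ⟨_, u, u.strictMono, fun i j hij => u.injective (hbij.injOn (hmem i) (hmem j) hij),
    by rw [range_comp, hrange, hbij.image_eq]⟩

namespace LabelRandomizer

section Ordered

variable {ι : Type*} [LinearOrder ι]

/-- The patterns `T 0, T 1, …` have the form `L*U+L*`, are pairwise distinct, and both they and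
their labels `x` are sorted; all weights `k` are positive. -/
structure IsOrdered {m : ℕ} (T : Fin m → Finset ι) (k x : Fin m → ℝ) : Prop where
  weight_pos : ∀ i, 0 < k i
  nonempty : ∀ i, (T i).Nonempty
  exists_notMem : ∀ i, ∃ y, y ∉ T i
  ordConnected : ∀ i, (T i : Set ι).OrdConnected
  injective : Function.Injective T
  strongSetLE : ∀ i j, i ≤ j → StrongSetLE (T i) (T j)
  monotone_label : Monotone x

variable {E : ℝ}

lemma exists_isOptimal_isWindowed [Fintype ι] {J : Type*} [Fintype J]
    {R : LabelRandomizer ι J} {v : ι → ℝ} (hE : 1 < E) (hv : StrictMono v) (hdp : R.IsDP E)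
    (hR : R.IsUnbiased v) (y₀ : ι) :
    ∃ (B : ℝ) (k x : Finset ι → ℝ) (t : ι → ℝ) (A : ℝ),
      0 ≤ B ∧ IsOptimal E B R y₀ k x ∧ StrictMono t ∧ IsWindowed k x t A := by
  have : Nonempty ι := ⟨y₀⟩
  obtain ⟨B, hB0, hne⟩ := hdp.exists_improvement hE
  obtain ⟨k, x, hopt⟩ := exists_isOptimal hE.le hne y₀
  obtain ⟨W, A, idx, t, hmono, ht, hle⟩ :=
    exists_windowing hE hopt.weight_nonneg hv (hopt.convexLE.isUnbiased hR)
  have hweight (p) : 0 ≤ windowWeight W idx t A p := measureReal_nonneg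
  refine ⟨B, _, _, t, A, hB0, hopt.of_convexLE (mergeWeight_nonneg hweight)
    (abs_mergeLabel_le hweight (fun p => hopt.abs_label_le p.1) hB0)
    ((merge_convexLE (zero_lt_one.trans hE) hweight).trans hle), ht,
    isWindowed_merge hmono ht.monotone⟩

lemma IsDP.exists_isOrdered [Finite ι] [Nontrivial ι] {J : Type*} [Fintype J]
    {R : LabelRandomizer ι J} {v : ι → ℝ} (hdp : R.IsDP E) (hE : 1 < E) (hv : StrictMono v)
    (hR : R.IsUnbiased v) :
    ∃ (m : ℕ) (T : Fin m → Finset ι) (k x : Fin m → ℝ),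
      IsOrdered T k x ∧ (ofPatterns E T k x).ConvexLE R := by
  cases nonempty_fintype ι
  obtain ⟨y, y', hyy'⟩ := exists_pair_ne ι
  obtain ⟨B, k, x, t, A, hB0, hopt, ht, hwin⟩ := exists_isOptimal_isWindowed hE hv hdp hR y
  have hE0 : 0 < E := zero_lt_one.trans hE
  have hconst {T : Finset ι} {l : ℝ} : 0 < l → (∀ y, level E T y = l) → k T = 0 :=
    hopt.weight_eq_zero_of_constant_pattern hE0 hB0 hR ⟨y, y', hv.injective.ne hyy'⟩
  obtain ⟨m, u, hu, hinj, hrange⟩ := exists_strictMono_enumeration (s := {T | 0 < k T})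
    (p := active t A) hwin.exists_active_eq
  have hpos (i) : 0 < k (active t A (u i)) := hrange.subset (mem_range_self i)
  have hnonempty (i) : (active t A (u i)).Nonempty := by
    by_contra! hempty
    exact (hpos i).ne' (hconst one_pos fun y => by simp [level, hempty])
  have hnotMem (i) : ∃ y, y ∉ active t A (u i) := by
    by_contra! hall
    exact (hpos i).ne' (hconst hE0 fun y => if_pos (hall y))
  refine ⟨m, active t A ∘ u, k ∘ active t A ∘ u, x ∘ active t A ∘ u,
    ⟨hpos, hnonempty, hnotMem, fun i => ordConnected_active ht.monotone, hinj,
      fun i j hij => strongSetLE_active ht.monotone (hu.monotone hij), fun i j hij =>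
        hwin.label_le _ _ (hu.monotone hij) (hnonempty i) (hnonempty j) (hpos i) (hpos j)⟩,
    fun y φ hφ => (expect_ofPatterns_comp_of_injective hinj E x (fun S hS => ?_) y φ).trans_le
      (hopt.convexLE y φ hφ)⟩
  rw [hrange] at hS
  exact (hopt.weight_nonneg S).antisymm' (not_lt.1 hS)

end Ordered

end LabelRandomizer

lemma exists_isOrdered_of_matrix {E : ℝ} (hE : 1 < E) {Y : Finset ℝ} (hY : 1 < Y.card) {J : Type*}
    [Fintype J] (x₀ : J → ℝ) (M₀ : ℝ → J → ℝ) (hnonneg : ∀ y ∈ Y, ∀ j, 0 ≤ M₀ y j)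
    (hsum : ∀ y ∈ Y, ∑ j, M₀ y j = 1) (hdp : ∀ j, ∀ y ∈ Y, ∀ y' ∈ Y, M₀ y' j ≤ E * M₀ y j)
    (hmean : ∀ y ∈ Y, ∑ j, M₀ y j * x₀ j = y) :
    ∃ (m : ℕ) (T : Fin m → Finset Y) (k x : Fin m → ℝ) (M : ℝ → Fin m → ℝ),
      LabelRandomizer.IsOrdered T k x ∧ (∀ (y : Y) i, M y i = k i * level E (T i) y) ∧
      (∀ y ∈ Y, ∑ i, M y i = 1) ∧ (∀ y ∈ Y, ∑ i, M y i * x i = y) ∧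
      ∀ y ∈ Y, ∀ φ : ℝ → ℝ, ConvexOn ℝ univ φ →
        ∑ i, M y i * φ (x i) ≤ ∑ j, M₀ y j * φ (x₀ j) := by
  have : Nontrivial Y := Fintype.one_lt_card_iff_nontrivial.1 (by rwa [Fintype.card_coe])
  set R : LabelRandomizer Y J := ⟨fun y => M₀ y, x₀⟩
  have hR : R.IsDP E := ⟨fun y => hnonneg y y.2, fun j y y' => hdp j y y.2 y' y'.2⟩
  have hunbiased : R.IsUnbiased Subtype.val :=
    ⟨fun y => by simpa only [LabelRandomizer.expect, mul_one] using hsum y y.2,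
      fun y => hmean y y.2⟩
  obtain ⟨m, T, k, x, hord, hle⟩ := hR.exists_isOrdered hE (Subtype.strictMono_coe _) hunbiased
  set M : ℝ → Fin m → ℝ := Function.extend Subtype.val (fun y i => k i * level E (T i) y) 0
  have hM (y : Y) i : M y i = k i * level E (T i) y :=
    congrFun (Subtype.val_injective.extend_apply _ _ y) i
  have hexpect (y : Y) (φ : ℝ → ℝ) :
      ∑ i, M y i * φ (x i) = (LabelRandomizer.ofPatterns E T k x).expect y φ := by
    simp only [hM, LabelRandomizer.expect, LabelRandomizer.ofPatterns]
  have hunbiased' := hle.isUnbiased hunbiased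
  refine ⟨m, T, k, x, M, hord, hM, fun y hy => ?_, fun y hy => ?_, fun y hy φ hφ => ?_⟩
  · simpa only [mul_one] using (hexpect ⟨y, hy⟩ fun _ => 1).trans (hunbiased'.expect_one ⟨y, hy⟩)
  · exact (hexpect ⟨y, hy⟩ id).trans (hunbiased'.expect_id ⟨y, hy⟩)
  · exact (hexpect ⟨y, hy⟩ φ).trans_le (hle ⟨y, hy⟩ φ hφ)

theorem stmt_2_general
    (ε : ℝ) (hε : 0 < ε)
    (Y : Finset ℝ) (hYcard : 2 ≤ Y.card)
    (m₀ : ℕ) (yhat₀ : Fin m₀ → ℝ) (M₀ : ℝ → Fin m₀ → ℝ)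
    (h₀nonneg : ∀ y ∈ Y, ∀ i, 0 ≤ M₀ y i)
    (h₀sum : ∀ y ∈ Y, ∑ i, M₀ y i = 1)
    (h₀dp : ∀ i, ∀ y ∈ Y, ∀ y' ∈ Y, M₀ y' i ≤ Real.exp ε * M₀ y i)
    (h₀unbiased : ∀ y ∈ Y, ∑ i, M₀ y i * yhat₀ i = y) :
    ∃ (m : ℕ) (yhat : Fin m → ℝ) (M : ℝ → Fin m → ℝ),
      (∀ y ∈ Y, ∀ i, 0 ≤ M y i) ∧
      (∀ y ∈ Y, ∑ i, M y i = 1) ∧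
      (∀ i, ∀ y ∈ Y, ∀ y' ∈ Y, M y' i ≤ Real.exp ε * M y i) ∧
      (∀ y ∈ Y, ∑ i, M y i * yhat i = y) ∧
      Monotone yhat ∧
      (∀ y ∈ Y, ∀ φ : ℝ → ℝ, ConvexOn ℝ Set.univ φ →
        ∑ i, M y i * φ (yhat i) ≤ ∑ i, M₀ y i * φ (yhat₀ i)) ∧
      ∃ q : Fin m → ℝ,
        (∀ i, ∃ y ∈ Y, M y i = q i) ∧
        (∀ i, ∀ y ∈ Y, q i ≤ M y i) ∧
        (∀ i, ∃ y ∈ Y, M y i ≠ 0) ∧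
        (∀ i, ∀ y ∈ Y, M y i = q i ∨ M y i = Real.exp ε * q i) ∧
        (∀ i, ∃ y ∈ Y, M y i = Real.exp ε * q i) ∧
        (∀ i, ∀ y ∈ Y, ∀ y' ∈ Y, ∀ y'' ∈ Y, y ≤ y' → y' ≤ y'' →
          M y i = Real.exp ε * q i → M y'' i = Real.exp ε * q i →
          M y' i = Real.exp ε * q i) ∧
        ∃ Φ₁ Φ₂ : Fin m → ℝ,
          (∀ i, Φ₁ i ∈ Y ∧ M (Φ₁ i) i = Real.exp ε * q i ∧
            ∀ y ∈ Y, M y i = Real.exp ε * q i → Φ₁ i ≤ y) ∧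
          (∀ i, Φ₂ i ∈ Y ∧ M (Φ₂ i) i = Real.exp ε * q i ∧
            ∀ y ∈ Y, M y i = Real.exp ε * q i → y ≤ Φ₂ i) ∧
          (∀ i i' : Fin m, i < i' →
            Φ₁ i ≤ Φ₁ i' ∧ Φ₂ i ≤ Φ₂ i' ∧ (Φ₁ i < Φ₁ i' ∨ Φ₂ i < Φ₂ i')) := by
  have hE : 1 < Real.exp ε := Real.one_lt_exp_iff.2 hε
  obtain ⟨m, T, k, x, M, hord, hM, hsum, hmean, hle⟩ :=
    exists_isOrdered_of_matrix hE hYcard yhat₀ M₀ h₀nonneg h₀sum h₀dp h₀unbiased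
  have hk (i) : 0 ≤ k i := (hord.weight_pos i).le
  have hU (y : Y) (i) : M y i = Real.exp ε * k i ↔ y ∈ T i := by
    rw [hM, mul_level_eq_iff_mem hE (hord.weight_pos i)]
  have hL {y : Y} {i} (hy : y ∉ T i) : M y i = k i := by rw [hM, mul_level_of_notMem hy]
  have hlower (y : Y) (i) : k i ≤ M y i := (le_mul_level hE.le (hk i)).trans_eq (hM y i).symm
  have hupper (y : Y) (i) : M y i ≤ Real.exp ε * k i :=
    (hM y i).trans_le (mul_level_le hE.le (hk i))
  have hmin (i) : ∃ y ∈ Y, M y i = k i := by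
    obtain ⟨y, hy⟩ := hord.exists_notMem i
    exact ⟨y, y.2, hL hy⟩
  refine ⟨m, x, M, fun y hy i => (hk i).trans (hlower ⟨y, hy⟩ i), hsum,
    fun i y hy y' hy' => (hupper ⟨y', hy'⟩ i).trans
      (mul_le_mul_of_nonneg_left (hlower ⟨y, hy⟩ i) (Real.exp_pos ε).le), hmean,
    hord.monotone_label, hle, k, hmin, fun i y hy => hlower ⟨y, hy⟩ i,
    fun i => (hmin i).imp fun y hy => ⟨hy.1, hy.2.trans_ne (hord.weight_pos i).ne'⟩,
    fun i y hy => ?_, fun i => ?_, fun i y hy y' hy' y'' hy'' hle hle' hyU hyU' => ?_,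
    fun i => (T i).min' (hord.nonempty i), fun i => (T i).max' (hord.nonempty i),
    fun i => ?_, fun i => ?_, fun i i' hii' => ?_⟩
  · by_cases h : ⟨y, hy⟩ ∈ T i
    exacts [.inr ((hU _ i).2 h), .inl (hL h)]
  · obtain ⟨y, hy⟩ := hord.nonempty i
    exact ⟨y, y.2, (hU y i).2 hy⟩
  · exact (hU ⟨y', hy'⟩ i).2 ((hord.ordConnected i).out ((hU ⟨y, hy⟩ i).1 hyU)
      ((hU ⟨y'', hy''⟩ i).1 hyU') ⟨hle, hle'⟩)
  · exact ⟨Subtype.prop _, (hU _ i).2 ((T i).min'_mem _), fun y hy hyU =>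
      (T i).min'_le ⟨y, hy⟩ ((hU ⟨y, hy⟩ i).1 hyU)⟩
  · exact ⟨Subtype.prop _, (hU _ i).2 ((T i).max'_mem _), fun y hy hyU =>
      (T i).le_max' ⟨y, hy⟩ ((hU ⟨y, hy⟩ i).1 hyU)⟩
  · have hST := hord.strongSetLE i i' hii'.le
    exact ⟨hST.min'_le_min' _ _, hST.max'_le_max' _ _, hST.min'_lt_min'_or_max'_lt_max'
      (hord.ordConnected i) (hord.ordConnected i') (hord.injective.ne hii'.ne) _ _⟩

/-- For `ε > 0`, a finite label set `Y ⊆ ℝ` with `|Y| ≥ 2`, a loss `g`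
convex in its first argument and a prior `P`: every `ε`-DP unbiased randomizer `M₀` can
be replaced by an `ε`-DP unbiased randomizer `M` with sorted output labels, no larger
noisy label loss, whose columns have all entries in `{q i, e^ε·q i}` (with `q i` the
minimum entry of column `i`, both values attained, columns nonzero), such that each
column's set of `U`-entries is a contiguous interval of `Y` (pattern `L*U+L*`), and the
endpoints `Φ₁, Φ₂` of these intervals are weakly increasing in the column index with at
least one strict increase at each step. -/
theorem stmt_2
    (ε : ℝ) (hε : 0 < ε)
    (Y : Finset ℝ) (hYcard : 2 ≤ Y.card)
    (g : ℝ → ℝ → ℝ)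
    (hg : ∀ y ∈ Y, ConvexOn ℝ Set.univ (fun s => g s y))
    (P : ℝ → ℝ) (hP0 : ∀ y ∈ Y, 0 ≤ P y) (hP1 : ∑ y ∈ Y, P y = 1)
    (m₀ : ℕ) (yhat₀ : Fin m₀ → ℝ) (M₀ : ℝ → Fin m₀ → ℝ)
    (h₀nonneg : ∀ y ∈ Y, ∀ i, 0 ≤ M₀ y i)
    (h₀sum : ∀ y ∈ Y, ∑ i, M₀ y i = 1)
    (h₀dp : ∀ i, ∀ y ∈ Y, ∀ y' ∈ Y, M₀ y' i ≤ Real.exp ε * M₀ y i)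
    (h₀unbiased : ∀ y ∈ Y, ∑ i, M₀ y i * yhat₀ i = y) :
    ∃ (m : ℕ) (yhat : Fin m → ℝ) (M : ℝ → Fin m → ℝ),
      -- M is a label randomizer on Y
      (∀ y ∈ Y, ∀ i, 0 ≤ M y i) ∧
      (∀ y ∈ Y, ∑ i, M y i = 1) ∧
      -- M is ε-DP
      (∀ i, ∀ y ∈ Y, ∀ y' ∈ Y, M y' i ≤ Real.exp ε * M y i) ∧
      -- M is unbiased
      (∀ y ∈ Y, ∑ i, M y i * yhat i = y) ∧
      -- the output labels are sorted: yhat 1 ≤ ... ≤ yhat m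
      Monotone yhat ∧
      -- (1) the noisy label loss does not increase
      (∑ y ∈ Y, P y * ∑ i, M y i * g (yhat i) y) ≤
        (∑ y ∈ Y, P y * ∑ i, M₀ y i * g (yhat₀ i) y) ∧
      -- q i is the minimum entry of column i
      ∃ q : Fin m → ℝ,
        (∀ i, ∃ y ∈ Y, M y i = q i) ∧
        (∀ i, ∀ y ∈ Y, q i ≤ M y i) ∧
        -- (2) every column is nonzero, all entries lie in {q i, e^ε·q i},
        -- and both values are attained
        (∀ i, ∃ y ∈ Y, M y i ≠ 0) ∧
        (∀ i, ∀ y ∈ Y, M y i = q i ∨ M y i = Real.exp ε * q i) ∧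
        (∀ i, ∃ y ∈ Y, M y i = Real.exp ε * q i) ∧
        -- (3) the set T(i) = {y ∈ Y : M y i = e^ε·q i} is a contiguous interval of Y
        (∀ i, ∀ y ∈ Y, ∀ y' ∈ Y, ∀ y'' ∈ Y, y ≤ y' → y' ≤ y'' →
          M y i = Real.exp ε * q i → M y'' i = Real.exp ε * q i →
          M y' i = Real.exp ε * q i) ∧
        -- (4) Φ₁ i = min T(i) and Φ₂ i = max T(i) are weakly increasing,
        -- with at least one strict increase at each step
        ∃ Φ₁ Φ₂ : Fin m → ℝ,
          (∀ i, Φ₁ i ∈ Y ∧ M (Φ₁ i) i = Real.exp ε * q i ∧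
            ∀ y ∈ Y, M y i = Real.exp ε * q i → Φ₁ i ≤ y) ∧
          (∀ i, Φ₂ i ∈ Y ∧ M (Φ₂ i) i = Real.exp ε * q i ∧
            ∀ y ∈ Y, M y i = Real.exp ε * q i → y ≤ Φ₂ i) ∧
          (∀ i i' : Fin m, i < i' →
            Φ₁ i ≤ Φ₁ i' ∧ Φ₂ i ≤ Φ₂ i' ∧ (Φ₁ i < Φ₁ i' ∨ Φ₂ i < Φ₂ i')) := by
  obtain ⟨m, yhat, M, hnonneg, hsum, hdp, hunbiased, hmono, hle, hcolumns⟩ :=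
    stmt_2_general ε hε Y hYcard m₀ yhat₀ M₀ h₀nonneg h₀sum h₀dp h₀unbiased
  exact ⟨m, yhat, M, hnonneg, hsum, hdp, hunbiased, hmono, Finset.sum_le_sum fun y hy =>
    mul_le_mul_of_nonneg_left (hle y hy _ (hg y hy)) (hP0 y hy), hcolumns⟩
end

section
/- Let ε > 0, let Y ⊆ ℝ be a finite set of input labels with |Y| ≥ 2, let g : ℝ × ℝ → ℝ be a loss such that g(·, y) is convex for every y ∈ Y, and let P be a prior on Y. Let M¹ be an ε-DP label randomizer on Y with finitely many output labels such that each column of M¹ is a positive scalar multiple of a vector with entries in {1, e^ε}, with these vectors pairwise distinct across columns. Then there exists an ε-DP label randomizer M² on Y, again with each column a positive scalar multiple of a {1, e^ε}-valued vector and with the same expected output as M¹ on every input label y ∈ Y, such that G(M²;P) ≤ G(M¹;P) and, with the output labels of M² sorted in increasing order, for every input label y ∈ Y the set of output indices i for which M²_{y→i} equals e^ε times the minimum entry of column i is a nonempty contiguous set of indices (i.e., every row of the signature matrix matches the pattern L*U+L*). -/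
/-!
The noisy loss for a convex `g` decreases when the rows of the randomizer move down in the convex
order, and so does the second moment of each row, strictly if mass moves from two labels to a label
between them. With `E = e^ε`, keep the labels of `M₁`, merging equal ones, and let `M` have least
total second moment among the `E`-DP matrices lying row by row below `M₁`. If `C i` is the minimum
of column `i`, then in each row every column `j` strictly between two columns above their minimum
attains its maximum `E * C j`.

Draw column `i` as an interval of length `C i` and put these intervals side by side. By the above
there is for each row `y` a single interval `[a y, b y)` that meets column `i` in length
`(M y i - C i) / (E - 1)`. Cutting the line at all endpoints splits each column of `M` into positive
multiples of `{1, E}`-valued columns, with `[a y, b y)` as the contiguous `U`-block of row `y`. This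
block is empty only if all rows of `M` agree, and then all mass can be put at their common mean.
-/

section Weights

variable {ι κ : Type*}

/-- The weights `p` after mass `δ` is added at `j`, taken from `i` and `k` in proportions `u` and
`v`. -/
def concentrate [DecidableEq ι] (p : ι → ℝ) (i j k : ι) (u v δ : ℝ) : ι → ℝ :=
  p + δ • (Pi.single j 1 - u • Pi.single i 1 - v • Pi.single k 1)

lemma concentrate_mem_Icc [DecidableEq ι] {p lo hi : ι → ℝ} (hp : p ∈ Set.Icc lo hi) {i j k : ι}
    (hij : i ≠ j) (hjk : j ≠ k) (hik : i ≠ k) {u v δ : ℝ} (hu : 0 ≤ u) (hv : 0 ≤ v) (hδ : 0 ≤ δ)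
    (hpi : δ * u ≤ p i - lo i) (hpj : δ ≤ hi j - p j) (hpk : δ * v ≤ p k - lo k) :
    concentrate p i j k u v δ ∈ Set.Icc lo hi := by
  have hδu := mul_nonneg hδ hu
  have hδv := mul_nonneg hδ hv
  rw [Set.mem_Icc, Pi.le_def, Pi.le_def, ← forall_and]
  intro l
  have := hp.1 l
  have := hp.2 l
  simp only [concentrate, Pi.add_apply, Pi.smul_apply, Pi.sub_apply, smul_eq_mul, Pi.single_apply]
  split_ifs <;> subst_vars <;> first | contradiction | (constructor <;> linarith)

variable [Fintype ι]

lemma sum_concentrate_mul [DecidableEq ι] (p : ι → ℝ) (i j k : ι) (u v δ : ℝ) (ψ : ι → ℝ) :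
    ∑ l, concentrate p i j k u v δ l * ψ l =
      ∑ l, p l * ψ l + δ * (ψ j - (u * ψ i + v * ψ k)) := by
  simp only [concentrate, Pi.add_apply, Pi.smul_apply, Pi.sub_apply, smul_eq_mul, add_mul, sub_mul,
    mul_assoc, Finset.sum_add_distrib, Finset.sum_sub_distrib, ← Finset.mul_sum, Pi.single_apply,
    ite_mul, one_mul, zero_mul, Finset.sum_ite_eq', Finset.mem_univ, if_true]
  ring

/-- The push-forward of the weights `p` along `f`. -/
def fiberSum [DecidableEq κ] (f : ι → κ) (p : ι → ℝ) (j : κ) : ℝ := ∑ i with f i = j, p i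

lemma le_fiberSum [DecidableEq κ] (f : ι → κ) {p : ι → ℝ} (hp : ∀ i, 0 ≤ p i) (i : ι) :
    p i ≤ fiberSum f p (f i) :=
  Finset.single_le_sum (fun i _ => hp i) (by simp)

variable [Fintype κ]

lemma sum_fiberSum_mul [DecidableEq κ] (f : ι → κ) (p : ι → ℝ) (φ : κ → ℝ) :
    ∑ j, fiberSum f p j * φ j = ∑ i, p i * φ (f i) := by
  rw [← Finset.sum_fiberwise _ f]
  refine Finset.sum_congr rfl fun j _ => ?_
  rw [fiberSum, Finset.sum_mul]
  exact Finset.sum_congr rfl fun i hi => by rw [(Finset.mem_filter.mp hi).2]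

end Weights

section ConvexOrder

variable {ι κ τ : Type*} [Fintype ι] [Fintype κ] [Fintype τ]

/-- The convex order on finitely supported measures on the line: `ConvexLE p x q z` says that
`∑ i, p i • δ_{x i}` integrates every convex function to at most what `∑ j, q j • δ_{z j}` does. -/
def ConvexLE (p x : ι → ℝ) (q z : κ → ℝ) : Prop :=
  ∀ φ : ℝ → ℝ, ConvexOn ℝ Set.univ φ → ∑ i, p i * φ (x i) ≤ ∑ j, q j * φ (z j)

namespace ConvexLE

variable {p x : ι → ℝ} {q z : κ → ℝ} {r w : τ → ℝ}

lemma refl (p x : ι → ℝ) : ConvexLE p x p x := fun _ _ => le_rfl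

lemma trans (h : ConvexLE p x q z) (h' : ConvexLE q z r w) : ConvexLE p x r w :=
  fun φ hφ => (h φ hφ).trans (h' φ hφ)

lemma sum_mul_eq (h : ConvexLE p x q z) {φ : ℝ → ℝ} (hconvex : ConvexOn ℝ Set.univ φ)
    (hconcave : ConcaveOn ℝ Set.univ φ) : ∑ i, p i * φ (x i) = ∑ j, q j * φ (z j) :=
  le_antisymm (h φ hconvex) <| by
    simpa only [Pi.neg_apply, mul_neg, Finset.sum_neg_distrib, neg_le_neg_iff]
      using h (-φ) hconcave.neg

lemma sum_eq (h : ConvexLE p x q z) : ∑ i, p i = ∑ j, q j := by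
  simpa only [mul_one] using
    h.sum_mul_eq (convexOn_const (1 : ℝ) convex_univ) (concaveOn_const (1 : ℝ) convex_univ)

lemma mean_eq (h : ConvexLE p x q z) : ∑ i, p i * x i = ∑ j, q j * z j :=
  h.sum_mul_eq (convexOn_id convex_univ) (concaveOn_id convex_univ)

end ConvexLE

lemma convexLE_mean {p x : ι → ℝ} (hp : ∀ i, 0 ≤ p i) (hp_sum : ∑ i, p i = 1) {q : κ → ℝ}
    (hq_sum : ∑ j, q j = 1) : ConvexLE q (fun _ => ∑ i, p i * x i) p x := fun φ hφ => by
  rw [← Finset.sum_mul, hq_sum, one_mul]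
  simpa only [smul_eq_mul] using
    hφ.map_sum_le (fun i _ => hp i) hp_sum fun i _ => Set.mem_univ (x i)

lemma exists_convexLE_secondMoment_lt {p x lo hi : ι → ℝ} (hp : p ∈ Set.Icc lo hi) {i j k : ι}
    (hij : x i < x j) (hjk : x j < x k) (hpi : lo i < p i) (hpj : p j < hi j)
    (hpk : lo k < p k) :
    ∃ q ∈ Set.Icc lo hi, ConvexLE q x p x ∧ ∑ l, q l * x l ^ 2 < ∑ l, p l * x l ^ 2 := by
  classical
  obtain ⟨u, v, hu, hv, huv, hbary⟩ : x j ∈ openSegment ℝ (x i) (x k) := by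
    rw [openSegment_eq_Ioo (hij.trans hjk)]
    exact ⟨hij, hjk⟩
  obtain ⟨δ, hδ, hδi, hδj, hδk⟩ :
      ∃ δ > 0, δ ≤ p i - lo i ∧ δ ≤ hi j - p j ∧ δ ≤ p k - lo k := by
    refine ⟨min (p i - lo i) (min (hi j - p j) (p k - lo k)), ?_, ?_, ?_, ?_⟩ <;> simp [*]
  refine ⟨concentrate p i j k u v δ, concentrate_mem_Icc hp (ne_of_apply_ne x hij.ne)
    (ne_of_apply_ne x hjk.ne) (ne_of_apply_ne x (hij.trans hjk).ne) hu.le hv.le hδ.le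
    ((mul_le_of_le_one_right hδ.le (by linarith)).trans hδi) hδj
    ((mul_le_of_le_one_right hδ.le (by linarith)).trans hδk), fun φ hφ => ?_, ?_⟩
  · have hconvex := hφ.2 (Set.mem_univ (x i)) (Set.mem_univ (x k)) hu.le hv.le huv
    rw [hbary, smul_eq_mul, smul_eq_mul] at hconvex
    rw [sum_concentrate_mul p i j k u v δ fun l => φ (x l)]
    nlinarith
  · have hconvex := (even_two.strictConvexOn_pow two_ne_zero).2 (Set.mem_univ (x i))
      (Set.mem_univ (x k)) (hij.trans hjk).ne hu hv huv
    rw [hbary, smul_eq_mul, smul_eq_mul] at hconvex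
    rw [sum_concentrate_mul p i j k u v δ fun l => x l ^ 2]
    nlinarith

lemma convexLE_comp_fiberSum [DecidableEq κ] (f : ι → κ) (p : ι → ℝ) (x : κ → ℝ) :
    ConvexLE p (x ∘ f) (fiberSum f p) x :=
  fun φ _ => (sum_fiberSum_mul f p (φ ∘ x)).ge

end ConvexOrder

section Randomizer

variable {T ι κ : Type*} [Fintype ι] [Fintype κ] {E : ℝ}

/-- A stochastic matrix with rows indexed by `T` whose entries within each column differ by a factor
of at most `E`; for `E = e^ε` this is an `ε`-DP label randomizer. -/
structure IsDPRandomizer (E : ℝ) (M : T → ι → ℝ) : Prop where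
  nonneg : ∀ y i, 0 ≤ M y i
  sum_eq_one : ∀ y, ∑ i, M y i = 1
  le_mul : ∀ i y y', M y' i ≤ E * M y i

protected lemma IsDPRandomizer.fiberSum [DecidableEq κ] {M : T → ι → ℝ} (hM : IsDPRandomizer E M)
    (f : ι → κ) : IsDPRandomizer E fun y => fiberSum f (M y) where
  nonneg y _ := Finset.sum_nonneg fun i _ => hM.nonneg y i
  sum_eq_one y := by
    simpa only [mul_one, hM.sum_eq_one] using sum_fiberSum_mul f (M y) fun _ => 1
  le_mul j y y' := by
    rw [fiberSum, fiberSum, Finset.mul_sum]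
    exact Finset.sum_le_sum fun i _ => hM.le_mul i y y'

lemma IsDPRandomizer.exists_strictMono_convexLE {M : T → ι → ℝ} (hM : IsDPRandomizer E M)
    (x : ι → ℝ) :
    ∃ (m : ℕ) (z : Fin m → ℝ) (N : T → Fin m → ℝ), StrictMono z ∧ IsDPRandomizer E N ∧
      ∀ y, ConvexLE (N y) z (M y) x := by
  classical
  let labels : Finset ℝ := Finset.univ.image x
  have hindex (i : ι) : ∃ j, labels.orderEmbOfFin rfl j = x i := by
    rw [← Set.mem_range, Finset.range_orderEmbOfFin]
    exact Finset.mem_image_of_mem x (Finset.mem_univ i)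
  choose f hf using hindex
  refine ⟨labels.card, labels.orderEmbOfFin rfl, fun y => fiberSum f (M y),
    (labels.orderEmbOfFin rfl).strictMono, hM.fiberSum f, fun y φ _ => ?_⟩
  simpa only [Function.comp_apply, hf] using
    (sum_fiberSum_mul f (M y) (φ ∘ labels.orderEmbOfFin rfl)).le

lemma isCompact_dpRandomizer_convexLE (M : T → ι → ℝ) (x : ι → ℝ) :
    IsCompact {N : T → ι → ℝ | IsDPRandomizer E N ∧ ∀ y, ConvexLE (N y) x (M y) x} := by
  refine (isCompact_Icc (a := (0 : T → ι → ℝ)) (b := 1)).of_isClosed_subset ?_ ?_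
  · have hset : {N : T → ι → ℝ | IsDPRandomizer E N ∧ ∀ y, ConvexLE (N y) x (M y) x} =
        {N | (∀ y i, 0 ≤ N y i) ∧ (∀ y, ∑ i, N y i = 1) ∧ (∀ i y y', N y' i ≤ E * N y i) ∧
          ∀ y, ∀ φ : ℝ → ℝ, ConvexOn ℝ Set.univ φ →
            ∑ i, N y i * φ (x i) ≤ ∑ i, M y i * φ (x i)} :=
      Set.ext fun N => ⟨fun ⟨⟨h, h', h''⟩, hle⟩ => ⟨h, h', h'', hle⟩,
        fun ⟨h, h', h'', hle⟩ => ⟨⟨h, h', h''⟩, hle⟩⟩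
    simp only [hset, Set.ofPred_and, Set.ofPred_forall]
    refine .inter ?_ (.inter ?_ (.inter ?_ ?_)) <;>
      repeat' first
        | exact isClosed_le (by fun_prop) (by fun_prop)
        | exact isClosed_eq (by fun_prop) (by fun_prop)
        | refine isClosed_iInter fun _ => ?_
  · rintro N ⟨hN, -⟩
    refine ⟨hN.nonneg, fun y i => ?_⟩
    exact (Finset.single_le_sum (fun i _ => hN.nonneg y i) (Finset.mem_univ i)).trans_eq
      (hN.sum_eq_one y)

/-- An `E`-DP randomizer with output labels `x` whose rows have the least second moments among the
`E`-DP randomizers with the same labels that it dominates row by row in the convex order. -/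
structure IsConvexMinimal (E : ℝ) (x : ι → ℝ) (M : T → ι → ℝ) : Prop
    extends IsDPRandomizer E M where
  secondMoment_le : ∀ N : T → ι → ℝ, IsDPRandomizer E N → (∀ y, ConvexLE (N y) x (M y) x) →
    ∀ y, ∑ i, M y i * x i ^ 2 ≤ ∑ i, N y i * x i ^ 2

theorem IsDPRandomizer.exists_isConvexMinimal [Finite T] {M : T → ι → ℝ}
    (hM : IsDPRandomizer E M) (x : ι → ℝ) :
    ∃ N : T → ι → ℝ, IsConvexMinimal E x N ∧ ∀ y, ConvexLE (N y) x (M y) x := by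
  cases nonempty_fintype T
  obtain ⟨N, ⟨hN, hNM⟩, hmin⟩ := (isCompact_dpRandomizer_convexLE M x).exists_isMinOn
    (f := fun N => ∑ y, ∑ i, N y i * x i ^ 2) ⟨M, hM, fun y => .refl _ _⟩ (by fun_prop)
  refine ⟨N, ⟨hN, fun N' hN' hle y => ?_⟩, hNM⟩
  have hrow (y : T) : ∑ i, N' y i * x i ^ 2 ≤ ∑ i, N y i * x i ^ 2 :=
    hle y _ even_two.convexOn_pow
  have htotal := hmin ⟨hN', fun y => (hle y).trans (hNM y)⟩
  by_contra! hlt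
  exact htotal.not_gt (Finset.sum_lt_sum (fun z _ => hrow z) ⟨y, Finset.mem_univ y, hlt⟩)

lemma IsDPRandomizer.mem_Icc_of_isLeast {M : T → ι → ℝ} (hM : IsDPRandomizer E M) {C : ι → ℝ}
    (hC : ∀ i, IsLeast (Set.range fun y => M y i) (C i)) (y : T) : M y ∈ Set.Icc C (E • C) := by
  refine ⟨fun i => (hC i).2 (Set.mem_range_self y), fun i => ?_⟩
  obtain ⟨y', hy'⟩ := (hC i).1
  exact (hM.le_mul i y' y).trans_eq (congrArg _ hy')

/-- Otherwise mass of row `y` could be moved from columns `i` and `k` to column `j`. -/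
theorem IsConvexMinimal.eq_mul_of_between {x : ι → ℝ} {M : T → ι → ℝ}
    (hE : 0 ≤ E) (hM : IsConvexMinimal E x M) {C : ι → ℝ}
    (hC : ∀ i, IsLeast (Set.range fun y => M y i) (C i)) {y : T} {i j k : ι} (hij : x i < x j)
    (hjk : x j < x k) (hi : C i < M y i) (hk : C k < M y k) : M y j = E * C j := by
  classical
  by_contra hne
  have hbox := hM.mem_Icc_of_isLeast hC
  have hC_nonneg (l) : 0 ≤ C l := by
    obtain ⟨z, hz⟩ := (hC l).1
    exact (hM.nonneg z l).trans_eq hz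
  obtain ⟨p, hp, hle, hlt⟩ := exists_convexLE_secondMoment_lt (hbox y) hij hjk hi
    (lt_of_le_of_ne ((hbox y).2 j) hne) hk
  let N := Function.update M y p
  have hN_box (z : T) : N z ∈ Set.Icc C (E • C) := by
    rcases eq_or_ne z y with rfl | hz
    · simpa [N] using hp
    · simpa [N, hz] using hbox z
  have hN_le (z : T) : ConvexLE (N z) x (M z) x := by
    rcases eq_or_ne z y with rfl | hz
    · simpa [N] using hle
    · simpa [N, hz] using ConvexLE.refl (M z) x
  have hN : IsDPRandomizer E N :=
    { nonneg := fun z l => (hC_nonneg l).trans ((hN_box z).1 l)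
      sum_eq_one := fun z => (hN_le z).sum_eq.trans (hM.sum_eq_one z)
      le_mul := fun l z z' =>
        ((hN_box z').2 l).trans (mul_le_mul_of_nonneg_left ((hN_box z).1 l) hE) }
  have := hM.secondMoment_le N hN hN_le y
  simp only [N, Function.update_self] at this
  exact this.not_gt hlt

end Randomizer

section Intervals

variable {m n : ℕ}

lemma sum_gap_eq {d : Fin (n + 1) → ℝ} (hd : Monotone d) {a b : ℝ}
    (ha : a ∈ Set.range d) (hb : b ∈ Set.range d) :
    ∑ k : Fin n, (if a ≤ d k.castSucc ∧ d k.castSucc < b then d k.succ - d k.castSucc else 0) =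
      max (b - a) 0 := by
  obtain ⟨p, rfl⟩ := ha
  obtain ⟨q, rfl⟩ := hb
  let clamp (t : ℝ) : ℝ := max (d p) (min t (d q))
  have hclamp (k : Fin n) : (if d p ≤ d k.castSucc ∧ d k.castSucc < d q then
      d k.succ - d k.castSucc else 0) = clamp (d k.succ) - clamp (d k.castSucc) := by
    have hle : d k.castSucc ≤ d k.succ := hd k.castSucc_le_succ
    have hp : d k.castSucc < d p → d k.succ ≤ d p := fun h =>
      hd (Fin.castSucc_lt_iff_succ_le.mp (hd.reflect_lt h))
    have hq : d k.castSucc < d q → d k.succ ≤ d q := fun h =>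
      hd (Fin.castSucc_lt_iff_succ_le.mp (hd.reflect_lt h))
    grind
  have htelescope : ∑ k : Fin n, (clamp (d k.succ) - clamp (d k.castSucc)) =
      clamp (d (Fin.last n)) - clamp (d 0) := by
    rw [Finset.sum_sub_distrib, sub_eq_sub_iff_add_eq_add, add_comm,
      ← Fin.sum_univ_succ fun k => clamp (d k), Fin.sum_univ_castSucc, add_comm]
  rw [Finset.sum_congr rfl fun k _ => hclamp k, htelescope]
  have := hd (Fin.zero_le p)
  have := hd (Fin.le_last q)
  grind

lemma exists_castSucc_le_lt_succ {α : Type*} [LinearOrder α] {f : Fin (m + 1) → α} {t : α}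
    (h0 : f 0 ≤ t) (hlast : t < f (Fin.last m)) : ∃ i : Fin m, f i.castSucc ≤ t ∧ t < f i.succ := by
  by_contra! h
  have hle (i : Fin (m + 1)) : f i ≤ t := by
    induction i using Fin.induction with
    | zero => exact h0
    | succ i ih => exact h i ih
  exact (hle _).not_gt hlast

lemma exists_monotone_mem_Ico {α : Type*} [LinearOrder α] {c : Fin (m + 1) → α} (hc : Monotone c)
    {t : Fin n → α} (ht : Monotone t) (hmem : ∀ k, t k ∈ Set.Ico (c 0) (c (Fin.last m))) :
    ∃ f : Fin n → Fin m, Monotone f ∧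
      ∀ k i, f k = i ↔ t k ∈ Set.Ico (c i.castSucc) (c i.succ) := by
  choose f hf using fun k => exists_castSucc_le_lt_succ (hmem k).1 (hmem k).2
  have hle {i j : Fin m} {s : α} (hi : c i.castSucc ≤ s) (hj : s < c j.succ) : i ≤ j :=
    Fin.castSucc_lt_succ_iff.mp (hc.reflect_lt (hi.trans_lt hj))
  refine ⟨f, fun k k' hk => hle (hf k).1 ((ht hk).trans_lt (hf k').2), fun k i => ⟨?_, ?_⟩⟩
  · rintro rfl
    exact hf k
  · exact fun hi => le_antisymm (hle (hf k).1 hi.2) (hle hi.1 (hf k).2)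

lemma exists_interval_overlap_eq {c : Fin (m + 1) → ℝ} (hc : Monotone c) {A : Fin m → ℝ}
    (hA : 0 ≤ A) (hAc : ∀ i, A i ≤ c i.succ - c i.castSucc) (hpos : ∃ i, 0 < A i)
    (hfull : ∀ i j k, i < j → j < k → 0 < A i → 0 < A k → A j = c j.succ - c j.castSucc) :
    ∃ a b, c 0 ≤ a ∧ a < b ∧ b ≤ c (Fin.last m) ∧
      ∀ i, max (min b (c i.succ) - max a (c i.castSucc)) 0 = A i := by
  classical
  have hsupport : ({i | 0 < A i} : Finset (Fin m)).Nonempty := by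
    simpa [Finset.filter_nonempty_iff] using hpos
  obtain ⟨p, hp, hp_min⟩ := Finset.exists_min_image _ id hsupport
  obtain ⟨q, hq, hq_max⟩ := Finset.exists_max_image _ id hsupport
  simp only [Finset.mem_filter, Finset.mem_univ, true_and, id] at hp hp_min hq hq_max
  have hzero_left (i : Fin m) (hi : i < p) : A i = 0 :=
    le_antisymm (not_lt.mp fun h => (hp_min i h).not_gt hi) (hA i)
  have hzero_right (i : Fin m) (hi : q < i) : A i = 0 :=
    le_antisymm (not_lt.mp fun h => (hq_max i h).not_gt hi) (hA i)
  have hlen (i : Fin m) : c i.castSucc ≤ c i.succ := hc i.castSucc_le_succ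
  have hsep (i j : Fin m) (h : i < j) : c i.succ ≤ c j.castSucc :=
    hc (Fin.succ_le_castSucc_iff.mpr h)
  have hpq : p ≤ q := hp_min q hq
  have h0 := hc (Fin.zero_le p.castSucc)
  have hlast := hc (Fin.le_last p.succ)
  have hlast' := hc (Fin.le_last q.succ)
  have hAp := hAc p
  have hAq := hAc q
  refine ⟨c p.succ - A p, max (c p.succ) (c q.castSucc + A q), by linarith,
    (sub_lt_self _ hp).trans_le (le_max_left _ _), max_le hlast (by linarith), fun i => ?_⟩
  have := hlen i
  rcases lt_trichotomy i p with hip | rfl | hpi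
  · grind
  · grind
  · rcases lt_trichotomy i q with hiq | rfl | hqi
    · have := hfull p i q hpi hiq hp hq
      grind
    · grind
    · grind

lemma fiberSum_indicator_gap {d : Fin (n + 1) → ℝ} (hd : Monotone d) {c : Fin (m + 1) → ℝ}
    {f : Fin n → Fin m} (hf : ∀ k i, f k = i ↔ d k.castSucc ∈ Set.Ico (c i.castSucc) (c i.succ))
    (hc : ∀ i, c i ∈ Set.range d) {a b : ℝ} (ha : a ∈ Set.range d) (hb : b ∈ Set.range d)
    (i : Fin m) :
    fiberSum f ({k | d k.castSucc ∈ Set.Ico a b}.indicator fun k => d k.succ - d k.castSucc) i =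
      max (min b (c i.succ) - max a (c i.castSucc)) 0 := by
  have hmax : max a (c i.castSucc) ∈ Set.range d := max_rec' (· ∈ Set.range d) ha (hc _)
  have hmin : min b (c i.succ) ∈ Set.range d := min_rec' (· ∈ Set.range d) hb (hc _)
  rw [← sum_gap_eq hd hmax hmin, fiberSum, Finset.sum_filter]
  refine Finset.sum_congr rfl fun k _ => ?_
  simp only [hf, Set.indicator_apply, Set.mem_ofPred_eq, Set.mem_Ico, ← ite_and, max_le_iff,
    lt_min_iff]
  exact if_congr (by tauto) rfl rfl

lemma exists_refinement {T : Type*} [Finite T] {c : Fin (m + 1) → ℝ} (hc : Monotone c)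
    {a b : T → ℝ} (ha : ∀ y, c 0 ≤ a y) (hab : ∀ y, a y < b y) (hb : ∀ y, b y ≤ c (Fin.last m)) :
    ∃ (n : ℕ) (l : Fin n → ℝ) (f : Fin n → Fin m) (U : T → Set (Fin n)), Monotone f ∧
      (∀ k, 0 < l k) ∧ (∀ y, (U y).Nonempty ∧ (U y).OrdConnected) ∧
      (∀ i, fiberSum f l i = c i.succ - c i.castSucc) ∧
      ∀ y i, fiberSum f ((U y).indicator l) i =
        max (min (b y) (c i.succ) - max (a y) (c i.castSucc)) 0 := by
  classical
  let cuts : Finset ℝ := (Set.finite_range c |>.union <|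
    (Set.finite_range a).union (Set.finite_range b)).toFinset
  have hcuts : (cuts : Set ℝ) ⊆ Set.Icc (c 0) (c (Fin.last m)) := by
    simp only [cuts, Set.Finite.coe_toFinset, Set.union_subset_iff, Set.range_subset_iff]
    exact ⟨fun i => ⟨hc (Fin.zero_le i), hc (Fin.le_last i)⟩,
      fun y => ⟨ha y, ((hab y).trans_le (hb y)).le⟩, fun y => ⟨((ha y).trans_lt (hab y)).le, hb y⟩⟩
  have hcuts_nonempty : cuts.Nonempty := ⟨c 0, by simp [cuts]⟩
  obtain ⟨n, hn⟩ := Nat.exists_eq_add_one.mpr hcuts_nonempty.card_pos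
  let d := cuts.orderEmbOfFin hn
  have hd_range : Set.range d = cuts := Finset.range_orderEmbOfFin cuts hn
  have hd_c (i) : c i ∈ Set.range d := by simp [hd_range, cuts]
  have hd_a (y) : a y ∈ Set.range d := by simp [hd_range, cuts]
  have hd_b (y) : b y ∈ Set.range d := by simp [hd_range, cuts]
  have hd_mem (k) : d k ∈ Set.Icc (c 0) (c (Fin.last m)) := hcuts (hd_range ▸ Set.mem_range_self k)
  have hd_lt (k : Fin n) : d k.castSucc < d k.succ := d.strictMono k.castSucc_lt_succ
  have hd_castSucc : Monotone fun k : Fin n => d k.castSucc :=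
    d.monotone.comp Fin.strictMono_castSucc.monotone
  obtain ⟨f, hf_mono, hf⟩ := exists_monotone_mem_Ico hc hd_castSucc
    fun k => ⟨(hd_mem _).1, (hd_lt k).trans_le (hd_mem _).2⟩
  refine ⟨n, fun k => d k.succ - d k.castSucc, f, fun y => {k | d k.castSucc ∈ Set.Ico (a y) (b y)},
    hf_mono, fun k => sub_pos.mpr (hd_lt k), fun y => ⟨?_, ?_⟩, fun i => ?_, fun y i => ?_⟩
  · obtain ⟨p, hp⟩ := hd_a y
    obtain ⟨q, hq⟩ := hd_b y
    have hpq : p < q := d.monotone.reflect_lt (hp ▸ hq ▸ hab y)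
    exact ⟨p.castPred (Fin.ne_last_of_lt hpq), hp.ge, hp.trans_lt (hab y)⟩
  · exact Set.ordConnected_Ico.preimage_mono hd_castSucc
  · rw [fiberSum, Finset.sum_filter]
    simp only [hf, Set.mem_Ico]
    rw [sum_gap_eq d.monotone (hd_c _) (hd_c _), max_eq_left]
    exact sub_nonneg.mpr (hc i.castSucc_le_succ)
  · exact fiberSum_indicator_gap d.monotone hf hd_c (hd_a y) (hd_b y) i

/-- The column minima `l` and the sets of `U`-entries of the rows of a randomizer all of whose rows
match the pattern `L*U+L*`. A column without an `L`-entry is excluded, since `l` would not be its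
minimum. -/
structure IsContiguousSignature {T κ : Type*} [Preorder κ] (l : κ → ℝ) (U : T → Set κ) : Prop where
  pos : ∀ k, 0 < l k
  exists_notMem : ∀ k, ∃ y, k ∉ U y
  nonempty : ∀ y, (U y).Nonempty
  ordConnected : ∀ y, (U y).OrdConnected

/-- `C i` is the width of column `i`, and `A y i` that of its part with signature `U` in row `y`. -/
lemma exists_layering {T : Type*} [Finite T] {C : Fin m → ℝ} {A : T → Fin m → ℝ}
    (hA : ∀ y, A y ∈ Set.Icc 0 C) (hzero : ∀ i, ∃ y, A y i = 0)
    (hpos : ∀ y, ∃ i, 0 < A y i)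
    (hfull : ∀ y i j k, i < j → j < k → 0 < A y i → 0 < A y k → A y j = C j) :
    ∃ (n : ℕ) (l : Fin n → ℝ) (f : Fin n → Fin m) (U : T → Set (Fin n)), Monotone f ∧
      IsContiguousSignature l U ∧ fiberSum f l = C ∧ ∀ y, fiberSum f ((U y).indicator l) = A y := by
  let c := Fin.partialSum C
  have hc_sub (i) : c i.succ - c i.castSucc = C i := by simp [c, Fin.partialSum_succ]
  have hc : Monotone c := Fin.monotone_iff_le_succ.mpr fun i => by
    obtain ⟨y, -⟩ := hzero i
    exact sub_nonneg.mp ((hc_sub i).symm ▸ ((hA y).1 i).trans ((hA y).2 i))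
  choose a b ha hab hb hoverlap using fun y => exists_interval_overlap_eq hc (hA y).1
    (fun i => (hc_sub i).symm ▸ (hA y).2 i) (hpos y)
    (fun i j k hij hjk hi hk => (hc_sub j).symm ▸ hfull y i j k hij hjk hi hk)
  obtain ⟨n, l, f, U, hf, hl, hU, hfl, hfU⟩ := exists_refinement hc ha hab hb
  have hA_eq (y : T) : fiberSum f ((U y).indicator l) = A y :=
    funext fun i => (hfU y i).trans (hoverlap y i)
  refine ⟨n, l, f, U, hf, ⟨hl, fun k => ?_, fun y => (hU y).1, fun y => (hU y).2⟩,
    funext fun i => (hfl i).trans (hc_sub i), hA_eq⟩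
  obtain ⟨y, hy⟩ := hzero (f k)
  refine ⟨y, fun hk => (hl k).not_ge ?_⟩
  have hle := le_fiberSum f (p := (U y).indicator l)
    (Set.indicator_nonneg fun j _ => (hl j).le) k
  rwa [Set.indicator_of_mem hk, hA_eq, hy] at hle

end Intervals

section Signature

variable {T ι κ : Type*} {E : ℝ}

open Classical in
/-- A row of a randomizer with column minima `l`: its entry in column `k` is `E * l k` (signature
`U`) if `k ∈ U` and `l k` (signature `L`) otherwise. -/
noncomputable def signatureRow (E : ℝ) (l : κ → ℝ) (U : Set κ) (k : κ) : ℝ :=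
  l k * if k ∈ U then E else 1

lemma signatureRow_eq_add_indicator (l : κ → ℝ) (U : Set κ) (k : κ) :
    signatureRow E l U k = l k + (E - 1) * U.indicator l k := by
  classical
  rw [signatureRow, Set.indicator_apply]
  split_ifs <;> ring

lemma signatureRow_of_notMem (l : κ → ℝ) {U : Set κ} {k : κ} (hk : k ∉ U) :
    signatureRow E l U k = l k := by
  rw [signatureRow, if_neg hk, mul_one]

lemma signatureRow_eq_mul_iff (hE : E ≠ 1) {l : κ → ℝ} {k : κ} (hl : l k ≠ 0) {U : Set κ} :
    signatureRow E l U k = E * l k ↔ k ∈ U := by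
  rw [signatureRow, mul_comm E, mul_right_inj' hl]
  by_cases hk : k ∈ U <;> simp [hk, hE.symm]

lemma signatureRow_mem_Icc (hE : 1 ≤ E) {l : κ → ℝ} {k : κ} (hl : 0 ≤ l k) (U : Set κ) :
    signatureRow E l U k ∈ Set.Icc (l k) (E * l k) := by
  rw [signatureRow]
  split_ifs
  · exact ⟨le_mul_of_one_le_right hl hE, (mul_comm _ _).le⟩
  · rw [mul_one]
    exact ⟨le_rfl, le_mul_of_one_le_left hl hE⟩

lemma fiberSum_signatureRow [Fintype κ] [DecidableEq ι] (f : κ → ι) (l : κ → ℝ) (U : Set κ)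
    (i : ι) : fiberSum f (signatureRow E l U) i =
      fiberSum f l i + (E - 1) * fiberSum f (U.indicator l) i := by
  simp only [fiberSum, signatureRow_eq_add_indicator, Finset.sum_add_distrib, Finset.mul_sum]

variable [Fintype ι]

lemma exists_isContiguousSignature_of_mean_eq [Nontrivial T] (hE : 0 ≤ E) {M : T → ι → ℝ}
    (hnonneg : ∀ y i, 0 ≤ M y i) (hsum : ∀ y, ∑ i, M y i = 1) {x : ι → ℝ} {μ : ℝ}
    (hmean : ∀ y, ∑ i, M y i * x i = μ) :
    ∃ (l : Fin 2 → ℝ) (U : T → Set (Fin 2)), IsContiguousSignature l U ∧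
      ∀ y, ConvexLE (signatureRow E l (U y)) (fun _ => μ) (M y) x := by
  classical
  obtain ⟨t, t', ht⟩ := exists_pair_ne T
  refine ⟨fun _ => (E + 1)⁻¹, fun y => {if y = t then 0 else 1},
    ⟨fun _ => by positivity, fun k => ?_, fun y => Set.singleton_nonempty _,
      fun y => Set.ordConnected_singleton⟩, fun y => ?_⟩
  · fin_cases k
    · exact ⟨t', by simp [ht.symm]⟩
    · exact ⟨t, by simp⟩
  · rw [← hmean y]
    refine convexLE_mean (hnonneg y) (hsum y) ?_
    have hrow_sum :
        ∑ k, signatureRow E (fun _ => (E + 1)⁻¹) {if y = t then (0 : Fin 2) else 1} k =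
          2 * (E + 1)⁻¹ + (E - 1) * (E + 1)⁻¹ := by
      simp [signatureRow_eq_add_indicator, Finset.sum_add_distrib, Set.indicator_apply]
    rw [hrow_sum, ← add_mul]
    exact (div_eq_one_iff_eq (by positivity)).mpr (by ring)

variable [Finite T]

lemma IsConvexMinimal.exists_isContiguousSignature {m : ℕ} {M : T → Fin m → ℝ} {x : Fin m → ℝ}
    (hE : 1 < E) (hM : IsConvexMinimal E x M) (hx : StrictMono x) {C : Fin m → ℝ}
    (hC : ∀ i, IsLeast (Set.range fun y => M y i) (C i)) (hne : ∀ y, M y ≠ C) :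
    ∃ (n : ℕ) (l : Fin n → ℝ) (f : Fin n → Fin m) (U : T → Set (Fin n)), Monotone f ∧
      IsContiguousSignature l U ∧ ∀ y, fiberSum f (signatureRow E l (U y)) = M y := by
  have hE' : 0 < E - 1 := sub_pos.mpr hE
  have hbox := hM.mem_Icc_of_isLeast hC
  let A (y : T) (i : Fin m) : ℝ := (M y i - C i) / (E - 1)
  have hA_pos {y i} : 0 < A y i ↔ C i < M y i := by
    rw [div_pos_iff_of_pos_right hE', sub_pos]
  have hA_mem (y : T) : A y ∈ Set.Icc 0 C := by
    refine ⟨fun i => div_nonneg (sub_nonneg.mpr ((hbox y).1 i)) hE'.le, fun i => ?_⟩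
    have : M y i ≤ E * C i := (hbox y).2 i
    exact (div_le_iff₀ hE').mpr (by linarith)
  have hA_exists_zero (i : Fin m) : ∃ y, A y i = 0 := by
    obtain ⟨y, hy⟩ := (hC i).1
    exact ⟨y, by simp [A, ← hy]⟩
  have hA_exists_pos (y : T) : ∃ i, 0 < A y i := by
    obtain ⟨-, i, hi⟩ := Pi.lt_def.mp ((hbox y).1.lt_of_ne (hne y).symm)
    exact ⟨i, hA_pos.mpr hi⟩
  have hA_full (y : T) (i j k : Fin m) (hij : i < j) (hjk : j < k) (hi : 0 < A y i)
      (hk : 0 < A y k) : A y j = C j := by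
    have := hM.eq_mul_of_between (by linarith) hC (hx hij) (hx hjk) (hA_pos.mp hi)
      (hA_pos.mp hk)
    exact (div_eq_iff hE'.ne').mpr (by linarith)
  obtain ⟨n, l, f, U, hf, hlU, hfl, hfU⟩ :=
    exists_layering hA_mem hA_exists_zero hA_exists_pos hA_full
  refine ⟨n, l, f, U, hf, hlU, fun y => funext fun i => ?_⟩
  rw [fiberSum_signatureRow, hfl, hfU, mul_div_cancel₀ _ hE'.ne', add_sub_cancel]

theorem IsDPRandomizer.exists_isContiguousSignature [Nontrivial T] {M : T → ι → ℝ} (hE : 1 < E)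
    (hM : IsDPRandomizer E M) (x : ι → ℝ) :
    ∃ (n : ℕ) (z : Fin n → ℝ) (l : Fin n → ℝ) (U : T → Set (Fin n)), Monotone z ∧
      IsContiguousSignature l U ∧ ∀ y, ConvexLE (signatureRow E l (U y)) z (M y) x := by
  obtain ⟨m, x', N, hx', hN, hNM⟩ := hM.exists_strictMono_convexLE x
  obtain ⟨N', hN', hN'N⟩ := hN.exists_isConvexMinimal x'
  choose t ht using fun i => Finite.exists_min fun y => N' y i
  let C (i : Fin m) : ℝ := N' (t i) i
  have hle (y : T) : ConvexLE (N' y) x' (M y) x := (hN'N y).trans (hNM y)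
  by_cases hne : ∀ y, N' y ≠ C
  · obtain ⟨n, l, f, U, hf, hlU, hfib⟩ := hN'.exists_isContiguousSignature hE hx'
      (fun i => ⟨⟨t i, rfl⟩, Set.forall_mem_range.mpr (ht i)⟩) hne
    refine ⟨n, x' ∘ f, l, U, hx'.monotone.comp hf, hlU, fun y => .trans ?_ (hle y)⟩
    rw [← hfib y]
    exact convexLE_comp_fiberSum f _ x'
  · push Not at hne
    obtain ⟨t₀, ht₀⟩ := hne
    have hconst (y : T) : N' y = C :=
      funext fun i => ((Finset.sum_eq_sum_iff_of_le fun i _ => ht i y).mp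
        ((ht₀ ▸ hN'.sum_eq_one t₀).trans (hN'.sum_eq_one y).symm) i (Finset.mem_univ i)).symm
    obtain ⟨l, U, hlU, hU⟩ := exists_isContiguousSignature_of_mean_eq (by linarith) hN'.nonneg
      hN'.sum_eq_one fun y => by rw [hconst y]
    exact ⟨2, _, l, U, monotone_const, hlU, fun y => (hU y).trans (hle y)⟩

end Signature

theorem stmt_4_general {α ι : Type*} [Fintype ι] {ε : ℝ} (hε : 0 < ε) {Y : Finset α}
    (hYcard : 2 ≤ Y.card) (yhat₁ : ι → ℝ) {M₁ : α → ι → ℝ}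
    (h₁nonneg : ∀ y ∈ Y, ∀ j, 0 ≤ M₁ y j) (h₁sum : ∀ y ∈ Y, ∑ j, M₁ y j = 1)
    (h₁dp : ∀ j, ∀ y ∈ Y, ∀ y' ∈ Y, M₁ y' j ≤ Real.exp ε * M₁ y j) :
    ∃ (m₂ : ℕ) (yhat₂ : Fin m₂ → ℝ) (M₂ : α → Fin m₂ → ℝ),
      (∀ y ∈ Y, ∀ i, 0 ≤ M₂ y i) ∧
      (∀ y ∈ Y, ∑ i, M₂ y i = 1) ∧
      (∀ i, ∀ y ∈ Y, ∀ y' ∈ Y, M₂ y' i ≤ Real.exp ε * M₂ y i) ∧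
      (∃ (c₂ : Fin m₂ → ℝ) (w₂ : Fin m₂ → α → ℝ),
        (∀ i, 0 < c₂ i) ∧
        (∀ i, ∀ y ∈ Y, w₂ i y = 1 ∨ w₂ i y = Real.exp ε) ∧
        (∀ i, ∀ y ∈ Y, M₂ y i = c₂ i * w₂ i y)) ∧
      (∀ y ∈ Y, ConvexLE (M₂ y) yhat₂ (M₁ y) yhat₁) ∧
      Monotone yhat₂ ∧
      ∃ q : Fin m₂ → ℝ,
        (∀ i, ∃ y ∈ Y, M₂ y i = q i) ∧
        (∀ i, ∀ y ∈ Y, q i ≤ M₂ y i) ∧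
        (∀ y ∈ Y, ∃ i, M₂ y i = Real.exp ε * q i) ∧
        (∀ y ∈ Y, ∀ i i' i'' : Fin m₂, i ≤ i' → i' ≤ i'' →
          M₂ y i = Real.exp ε * q i → M₂ y i'' = Real.exp ε * q i'' →
          M₂ y i' = Real.exp ε * q i') := by
  classical
  have hE : 1 < Real.exp ε := Real.one_lt_exp_iff.mpr hε
  have : Nontrivial Y := (Finset.one_lt_card_iff_nontrivial.mp hYcard).coe_sort
  have hM₁ : IsDPRandomizer (Real.exp ε) fun y : Y => M₁ y :=
    ⟨fun y => h₁nonneg y y.2, fun y => h₁sum y y.2, fun j y y' => h₁dp j y y.2 y' y'.2⟩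
  obtain ⟨n, z, l, U, hz, hlU, hle⟩ := hM₁.exists_isContiguousSignature hE yhat₁
  obtain ⟨r, hr⟩ := (Subtype.val_injective (p := (· ∈ Y))).hasLeftInverse
  have hr_mem {y : α} (hy : y ∈ Y) : r y = ⟨y, hy⟩ := hr ⟨y, hy⟩
  have hconvex (y) (hy : y ∈ Y) :
      ConvexLE (signatureRow (Real.exp ε) l (U (r y))) z (M₁ y) yhat₁ := by
    rw [hr_mem hy]
    exact hle ⟨y, hy⟩
  have hIcc (y k) := signatureRow_mem_Icc hE.le (hlU.pos k).le (U (r y))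
  have hU (y k) : signatureRow (Real.exp ε) l (U (r y)) k = Real.exp ε * l k ↔ k ∈ U (r y) :=
    signatureRow_eq_mul_iff hE.ne' (hlU.pos k).ne'
  refine ⟨n, z, fun y => signatureRow (Real.exp ε) l (U (r y)),
    fun y _ k => (hlU.pos k).le.trans (hIcc y k).1,
    fun y hy => (hconvex y hy).sum_eq.trans (h₁sum y hy),
    fun k y _ y' _ => (hIcc y' k).2.trans (by gcongr; exact (hIcc y k).1),
    ⟨l, fun k y => if k ∈ U (r y) then Real.exp ε else 1, hlU.pos,
      fun k y _ => (ite_eq_or_eq _ _ _).symm, fun k y _ => rfl⟩, hconvex, hz, l,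
    fun k => ?_, fun k y _ => (hIcc y k).1, fun y _ => ?_, fun y _ i i' i'' hi hi' h h'' => ?_⟩
  · obtain ⟨y, hy⟩ := hlU.exists_notMem k
    exact ⟨y, y.2, signatureRow_of_notMem l (by rwa [hr])⟩
  · exact (hlU.nonempty (r y)).imp fun k => (hU y k).mpr
  · exact (hU y i').mpr ((hlU.ordConnected (r y)).out ((hU y i).mp h) ((hU y i'').mp h'') ⟨hi, hi'⟩)

/-- For `ε > 0`, a finite label set `Y ⊆ ℝ` with `|Y| ≥ 2`, a loss `g`
convex in its first argument and a prior `P`: if `M₁` is an `ε`-DP label randomizer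
whose columns are positive multiples of pairwise distinct `{1, e^ε}`-valued vectors,
then there is an `ε`-DP label randomizer `M₂`, again with columns positive multiples of
`{1, e^ε}`-valued vectors, with the same expected output as `M₁` on every input label,
no larger noisy label loss, such that with its output labels sorted increasingly, every
row's set of `U`-entries (entries equal to `e^ε` times the column minimum) is a nonempty
contiguous set of output indices (pattern `L*U+L*`). -/
theorem stmt_4
    (ε : ℝ) (hε : 0 < ε)
    (Y : Finset ℝ) (hYcard : 2 ≤ Y.card)
    (g : ℝ → ℝ → ℝ)
    (hg : ∀ y ∈ Y, ConvexOn ℝ Set.univ (fun s => g s y))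
    (P : ℝ → ℝ) (hP0 : ∀ y ∈ Y, 0 ≤ P y) (hP1 : ∑ y ∈ Y, P y = 1)
    (m₁ : ℕ) (yhat₁ : Fin m₁ → ℝ) (M₁ : ℝ → Fin m₁ → ℝ)
    (h₁nonneg : ∀ y ∈ Y, ∀ j, 0 ≤ M₁ y j)
    (h₁sum : ∀ y ∈ Y, ∑ j, M₁ y j = 1)
    (h₁dp : ∀ j, ∀ y ∈ Y, ∀ y' ∈ Y, M₁ y' j ≤ Real.exp ε * M₁ y j)
    -- each column of M₁ is a positive multiple of a {1, e^ε}-valued vector,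
    -- with these vectors pairwise distinct across columns
    (c₁ : Fin m₁ → ℝ) (w₁ : Fin m₁ → ℝ → ℝ)
    (hc₁ : ∀ j, 0 < c₁ j)
    (hw₁ : ∀ j, ∀ y ∈ Y, w₁ j y = 1 ∨ w₁ j y = Real.exp ε)
    (hM₁ : ∀ j, ∀ y ∈ Y, M₁ y j = c₁ j * w₁ j y)
    (hw₁distinct : ∀ j j' : Fin m₁, j ≠ j' → ∃ y ∈ Y, w₁ j y ≠ w₁ j' y) :
    ∃ (m₂ : ℕ) (yhat₂ : Fin m₂ → ℝ) (M₂ : ℝ → Fin m₂ → ℝ),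
      -- M₂ is a label randomizer on Y
      (∀ y ∈ Y, ∀ i, 0 ≤ M₂ y i) ∧
      (∀ y ∈ Y, ∑ i, M₂ y i = 1) ∧
      -- M₂ is ε-DP
      (∀ i, ∀ y ∈ Y, ∀ y' ∈ Y, M₂ y' i ≤ Real.exp ε * M₂ y i) ∧
      -- each column of M₂ is a positive multiple of a {1, e^ε}-valued vector
      (∃ (c₂ : Fin m₂ → ℝ) (w₂ : Fin m₂ → ℝ → ℝ),
        (∀ i, 0 < c₂ i) ∧
        (∀ i, ∀ y ∈ Y, w₂ i y = 1 ∨ w₂ i y = Real.exp ε) ∧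
        (∀ i, ∀ y ∈ Y, M₂ y i = c₂ i * w₂ i y)) ∧
      -- same expected output as M₁ on every input label
      (∀ y ∈ Y, ∑ i, M₂ y i * yhat₂ i = ∑ j, M₁ y j * yhat₁ j) ∧
      -- the noisy label loss does not increase
      (∑ y ∈ Y, P y * ∑ i, M₂ y i * g (yhat₂ i) y) ≤
        (∑ y ∈ Y, P y * ∑ j, M₁ y j * g (yhat₁ j) y) ∧
      -- output labels of M₂ are sorted in increasing order
      Monotone yhat₂ ∧
      -- q i is the minimum entry of column i of M₂
      ∃ q : Fin m₂ → ℝ,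
        (∀ i, ∃ y ∈ Y, M₂ y i = q i) ∧
        (∀ i, ∀ y ∈ Y, q i ≤ M₂ y i) ∧
        -- every row's set of U-entries is nonempty and contiguous (pattern L*U+L*)
        (∀ y ∈ Y, ∃ i, M₂ y i = Real.exp ε * q i) ∧
        (∀ y ∈ Y, ∀ i i' i'' : Fin m₂, i ≤ i' → i' ≤ i'' →
          M₂ y i = Real.exp ε * q i → M₂ y i'' = Real.exp ε * q i'' →
          M₂ y i' = Real.exp ε * q i') := by
  obtain ⟨m₂, yhat₂, M₂, hnonneg, hsum, hdp, hcol, hconvex, hsorted, hpattern⟩ :=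
    stmt_4_general hε hYcard yhat₁ h₁nonneg h₁sum h₁dp
  exact ⟨m₂, yhat₂, M₂, hnonneg, hsum, hdp, hcol, fun y hy => (hconvex y hy).mean_eq,
    Finset.sum_le_sum fun y hy => mul_le_mul_of_nonneg_left (hconvex y hy _ (hg y hy)) (hP0 y hy),
    hsorted, hpattern⟩
end
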